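/- arXiv:1305.4719 — 2 statements merged into one kernel-verified Lean document; each statement's English description precedes it below -/
import Mathlib

section
/- Step-1 limit in the proof of Theorem 3.1 (display (ConclStep1)): set ϑ := −C·Γ(−Y)·(M^Y + (G+1)^Y) and d₃₂ := −(1/2)·E[(Z⁺+Ũ)²·1_{Z⁺+Ũ≤0}] − ∫₀^∞ w·(P(Z⁺+Ũ ≥ w) − C·M^Y/(Y·w^Y) − C·(G+1)^Y/(Y·w^Y)) dw. Then lim_{t→0⁺} t^{1−2/Y}·( t^{−1}·E[1 − exp(−t^{1/Y}·(Ũ + (Z+γ̃_t)⁺)) − t^{1/Y}·(Ũ + (Z+γ̃_t)⁺)] − ϑ ) = d₃₂. -/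
open MeasureTheory ProbabilityTheory Filter Topology Asymptotics Set

/-!
Write `X = Z⁺ + Ũ`, a piecewise linear function of two independent stable variables. Differentiating
the characteristic function of the stable law and inverting the Fourier transform yields the Stein
identity `E[U f(U)] = C ∫₀^∞ E[f(U + y) - f(U)] y^(-Y) dy`, first for Schwartz functions and then,
by truncation, for smooth bounded ones. Applied to truncated exponentials it bounds the exponential
moments of `-U`; applied to smoothed indicators it gives the tail
`P(U > x) = (C/Y) x^(-Y) + O(x^(-Y-1))`. A large value of `X` comes from a single large summand, so
its tail has Pareto constant `(C/Y)(M^Y + (G+1)^Y)`.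

With `s = t^(1/Y)` and `ρ(x) = 1 - e^(-x) - x`, the expectation `E[ρ(sX)]` is expanded to order `s²`
through the layer-cake formula. The negative part contributes `-½ s² E[X²; X ≤ 0]`. On the positive
part the Pareto tail integrates to a Gamma integral, which is `ϑ t`, and the deviation from the
Pareto tail, which is integrable against `w dw`, gives the second term of `d₃₂`. The drift moves `X`
by at most `|γ̃_t| → 0`, which changes `E[ρ(sX)]` by only `o(s²)`.
-/

/-! ### Gamma integrals in the half-plane -/

section PowerIntegrals

/-- The measure `x ^ (a - 1) dx` on `(0, ∞)`. Its moment generating function is the Gamma integral,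
which therefore inherits the analyticity of complex moment generating functions. -/
noncomputable def powerMeasure (a : ℝ) : Measure ℝ :=
  (volume.restrict (Ioi 0)).withDensity fun x => ENNReal.ofReal (x ^ (a - 1))

lemma complexMGF_id_powerMeasure (a : ℝ) (z : ℂ) :
    complexMGF id (powerMeasure a) z
      = ∫ x in Ioi (0 : ℝ), Complex.exp (z * x) * (x ^ (a - 1) : ℝ) := by
  rw [complexMGF, powerMeasure,
    integral_withDensity_eq_integral_toReal_smul (by fun_prop) (by simp)]
  refine setIntegral_congr_fun measurableSet_Ioi fun x (hx : 0 < x) => ?_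
  simp only [id]
  rw [ENNReal.toReal_ofReal (by positivity), Complex.real_smul, mul_comm]

lemma Iio_zero_subset_integrableExpSet_powerMeasure {a : ℝ} (ha : 0 < a) :
    Iio 0 ⊆ integrableExpSet id (powerMeasure a) := by
  intro t (ht : t < 0)
  have hint := integrableOn_rpow_mul_exp_neg_mul_rpow (s := a - 1) (p := 1) (b := -t)
    (by linarith) one_pos (neg_pos.2 ht)
  rw [integrableExpSet, mem_ofPred_eq, powerMeasure,
    integrable_withDensity_iff_integrable_smul₀' (by fun_prop) (by simp)]
  refine hint.congr_fun (fun x (hx : 0 < x) => ?_) measurableSet_Ioi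
  rw [ENNReal.toReal_ofReal (by positivity)]
  simp

lemma complexMGF_id_powerMeasure_neg_ofReal {a t : ℝ} (ha : 0 < a) (ht : 0 < t) :
    complexMGF id (powerMeasure a) (-(t : ℂ)) = Real.Gamma a * (t : ℂ) ^ (-(a : ℂ)) := by
  have hGamma : ∫ x in Ioi (0 : ℝ), Real.exp (-t * x) * x ^ (a - 1) = Real.Gamma a * t ^ (-a) := by
    rw [Real.rpow_neg ht.le, ← Real.inv_rpow ht.le, ← one_div, mul_comm (Real.Gamma a),
      ← Real.integral_rpow_mul_exp_neg_mul_Ioi ha ht]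
    simp_rw [neg_mul, mul_comm (Real.exp _)]
  rw [complexMGF_id_powerMeasure, ← Complex.ofReal_neg a, ← Complex.ofReal_cpow ht.le,
    ← Complex.ofReal_mul, ← hGamma, ← integral_complex_ofReal]
  simp

lemma frequently_ofReal_nhdsNE_one {p : ℂ → Prop} (hp : ∀ t : ℝ, 0 < t → p t) :
    ∃ᶠ z in 𝓝[≠] (1 : ℂ), p z := by
  have hlim : Tendsto ((↑) : ℝ → ℂ) (𝓝[>] 1) (𝓝[≠] 1) := by
    refine tendsto_nhdsWithin_iff.2 ⟨?_, ?_⟩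
    · exact (Complex.continuous_ofReal.tendsto' 1 1 (by simp)).mono_left nhdsWithin_le_nhds
    · filter_upwards [self_mem_nhdsWithin] with t (ht : 1 < t)
      exact mem_compl_singleton_iff.2 (by exact_mod_cast ht.ne')
  refine hlim.frequently (Eventually.frequently ?_)
  filter_upwards [self_mem_nhdsWithin] with t (ht : 1 < t)
  exact hp t (one_pos.trans ht)

theorem integral_cexp_neg_mul_mul_rpow {a : ℝ} (ha : 0 < a) {r : ℂ} (hr : 0 < r.re) :
    ∫ x in Ioi (0 : ℝ), Complex.exp (-r * x) * (x ^ (a - 1) : ℝ)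
      = Real.Gamma a * r ^ (-(a : ℂ)) := by
  have hopen : IsOpen {z : ℂ | 0 < z.re} := isOpen_lt continuous_const Complex.continuous_re
  have hmgf : DifferentiableOn ℂ (fun z => complexMGF id (powerMeasure a) (-z)) {z | 0 < z.re} := by
    refine differentiableOn_complexMGF.comp differentiableOn_id.neg fun z (hz : 0 < z.re) => ?_
    refine interior_mono (Iio_zero_subset_integrableExpSet_powerMeasure ha) ?_
    simpa using hz
  have hpow : DifferentiableOn ℂ (fun z : ℂ => Real.Gamma a * z ^ (-(a : ℂ))) {z | 0 < z.re} :=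
    fun z hz => ((differentiableAt_id.cpow_const (Or.inl hz)).const_mul _).differentiableWithinAt
  rw [← complexMGF_id_powerMeasure]
  exact (hmgf.analyticOnNhd hopen).eqOn_of_preconnected_of_frequently_eq
    (hpow.analyticOnNhd hopen) (convex_halfSpace_re_gt 0).isPreconnected
    (show (1 : ℂ) ∈ {z : ℂ | 0 < z.re} by simp)
    (frequently_ofReal_nhdsNE_one fun t ht => complexMGF_id_powerMeasure_neg_ofReal ha ht) hr

end PowerIntegrals

section CompensatedIntegrals

lemma integrableOn_rpow_mul_min_one {Y : ℝ} (hY : Y ∈ Ioo 1 2) :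
    IntegrableOn (fun y : ℝ => y ^ (-Y) * min y 1) (Ioi 0) := by
  rw [← Ioc_union_Ioi_eq_Ioi zero_le_one]
  refine IntegrableOn.union ?_ ?_
  · have hint : IntegrableOn (fun y : ℝ => y ^ (1 - Y)) (Ioc 0 1) :=
      (intervalIntegral.intervalIntegrable_rpow' (by linarith [hY.2] : -1 < 1 - Y)).1
    refine hint.congr_fun (fun y hy => ?_) measurableSet_Ioc
    rw [min_eq_left hy.2, ← Real.rpow_add_one hy.1.ne', neg_add_eq_sub]
  · refine (integrableOn_Ioi_rpow_of_lt (neg_lt_neg hY.1) one_pos).congr_fun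
      (fun y (hy : 1 < y) => ?_) measurableSet_Ioi
    rw [min_eq_right hy.le, mul_one]

variable {E : Type*} [NormedAddCommGroup E] [NormedSpace ℝ E]

lemma norm_rpow_smul_le {y : ℝ} (hy : 0 < y) (Y : ℝ) {v : E} {c : ℝ} (hv : ‖v‖ ≤ c * min y 1) :
    ‖y ^ (-Y) • v‖ ≤ c * (y ^ (-Y) * min y 1) := by
  rw [norm_smul, Real.norm_of_nonneg (by positivity), mul_left_comm]
  gcongr

lemma integrableOn_rpow_smul_of_norm_le {Y c : ℝ} (hY : Y ∈ Ioo 1 2) {g : ℝ → E}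
    (hg : AEStronglyMeasurable g (volume.restrict (Ioi 0)))
    (hbound : ∀ y, 0 < y → ‖g y‖ ≤ c * min y 1) :
    IntegrableOn (fun y : ℝ => y ^ (-Y) • g y) (Ioi 0) := by
  have hmeas : Measurable fun y : ℝ => y ^ (-Y) := by fun_prop
  refine ((integrableOn_rpow_mul_min_one hY).const_mul c).mono'
    (hmeas.aestronglyMeasurable.smul hg) ?_
  filter_upwards [self_mem_ae_restrict measurableSet_Ioi] with y (hy : 0 < y)
  exact norm_rpow_smul_le hy Y (hbound y hy)

lemma norm_setIntegral_rpow_smul_le {Y c : ℝ} (hY : Y ∈ Ioo 1 2) {g : ℝ → E}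
    (hbound : ∀ y, 0 < y → ‖g y‖ ≤ c * min y 1) :
    ‖∫ y in Ioi (0 : ℝ), y ^ (-Y) • g y‖ ≤ c * ∫ y in Ioi (0 : ℝ), y ^ (-Y) * min y 1 := by
  rw [← integral_const_mul]
  refine norm_integral_le_of_norm_le ((integrableOn_rpow_mul_min_one hY).const_mul c) ?_
  filter_upwards [self_mem_ae_restrict measurableSet_Ioi] with y (hy : 0 < y)
  exact norm_rpow_smul_le hy Y (hbound y hy)

lemma le_max_mul_min_one {z A B x : ℝ} (hx : 0 ≤ x) (hA : z ≤ A * x) (hB : z ≤ B) :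
    z ≤ max A B * min x 1 := by
  rcases le_total x 1 with h | h
  · rw [min_eq_left h]
    exact hA.trans (by gcongr; exact le_max_left A B)
  · rw [min_eq_right h, mul_one]
    exact hB.trans (le_max_right A B)

lemma norm_cexp_sub_one_le {z : ℂ} (hz : z.re ≤ 0) : ‖Complex.exp z - 1‖ ≤ ‖z‖ := by
  have hderiv_norm : ∀ w ∈ {w : ℂ | w.re ≤ 0}, ‖Complex.exp w‖ ≤ 1 := fun w hw => by
    rw [Complex.norm_exp]
    exact Real.exp_le_one_iff.2 hw
  simpa using Convex.norm_image_sub_le_of_norm_hasDerivWithin_le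
    (fun w _ => (Complex.hasDerivAt_exp w).hasDerivWithinAt) hderiv_norm
    (convex_halfSpace_re_le 0) (by simp : (0 : ℂ) ∈ _) hz

lemma norm_cexp_sub_one_le_two {z : ℂ} (hz : z.re ≤ 0) : ‖Complex.exp z - 1‖ ≤ 2 := by
  have hexp : ‖Complex.exp z‖ ≤ 1 := by
    rw [Complex.norm_exp]
    exact Real.exp_le_one_iff.2 hz
  calc ‖Complex.exp z - 1‖ ≤ ‖Complex.exp z‖ + ‖(1 : ℂ)‖ := norm_sub_le _ _
    _ ≤ 2 := by rw [norm_one]; linarith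

lemma norm_cexp_neg_mul_sub_one_le {r : ℂ} (hr : 0 ≤ r.re) {x : ℝ} (hx : 0 ≤ x) :
    ‖Complex.exp (-r * x) - 1‖ ≤ max ‖r‖ 2 * min x 1 := by
  have hre : (-r * x).re ≤ 0 := by simpa using mul_nonneg hr hx
  refine le_max_mul_min_one hx ?_ (norm_cexp_sub_one_le_two hre)
  simpa [abs_of_nonneg hx] using norm_cexp_sub_one_le hre

lemma integrableOn_rpow_smul_cexp_neg_mul_sub_one {Y : ℝ} (hY : Y ∈ Ioo 1 2) {r : ℂ}
    (hr : 0 ≤ r.re) :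
    IntegrableOn (fun x : ℝ => x ^ (-Y) • (Complex.exp (-r * x) - 1)) (Ioi 0) :=
  integrableOn_rpow_smul_of_norm_le hY (Continuous.aestronglyMeasurable (by fun_prop))
    fun _ hx => norm_cexp_neg_mul_sub_one_le hr hx.le

lemma tendsto_rpow_one_sub_smul_nhdsGT_zero {Y c : ℝ} (hY : Y < 2) {g : ℝ → E}
    (hbound : ∀ y, 0 < y → ‖g y‖ ≤ c * min y 1) :
    Tendsto (fun y : ℝ => y ^ (1 - Y) • g y) (𝓝[>] 0) (𝓝 0) := by
  have hlim : Tendsto (fun y : ℝ => ‖c‖ * y ^ (2 - Y)) (𝓝[>] 0) (𝓝 0) := by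
    have hcont : ContinuousAt (fun y : ℝ => ‖c‖ * y ^ (2 - Y)) 0 :=
      (Real.continuousAt_rpow_const 0 (2 - Y) (Or.inr (by linarith))).const_mul _
    simpa [Real.zero_rpow (by linarith : 2 - Y ≠ 0)] using
      hcont.tendsto.mono_left nhdsWithin_le_nhds
  refine squeeze_zero_norm' ?_ hlim
  filter_upwards [self_mem_nhdsWithin] with y (hy : 0 < y)
  calc ‖y ^ (1 - Y) • g y‖ = y ^ (1 - Y) * ‖g y‖ := by
        rw [norm_smul, Real.norm_of_nonneg (by positivity)]
    _ ≤ y ^ (1 - Y) * (‖c‖ * y) := by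
        gcongr
        exact (hbound y hy).trans (mul_le_mul (le_abs_self c) (min_le_left y 1)
          (by positivity) (norm_nonneg c))
    _ = ‖c‖ * y ^ (2 - Y) := by
        rw [show 2 - Y = 1 - Y + 1 by ring, Real.rpow_add_one hy.ne']
        ring

lemma tendsto_rpow_one_sub_smul_atTop {Y c : ℝ} (hY : 1 < Y) {g : ℝ → E}
    (hbound : ∀ y, 0 < y → ‖g y‖ ≤ c * min y 1) :
    Tendsto (fun y : ℝ => y ^ (1 - Y) • g y) atTop (𝓝 0) := by
  have hlim : Tendsto (fun y : ℝ => y ^ (1 - Y)) atTop (𝓝 0) := by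
    simpa using tendsto_rpow_neg_atTop (sub_pos.2 hY)
  refine hlim.zero_smul_isBoundedUnder_le
    (isBoundedUnder_of_eventually_le (a := ‖c‖) ?_)
  filter_upwards [eventually_gt_atTop 0] with y hy
  calc ‖g y‖ ≤ c * min y 1 := hbound y hy
    _ ≤ ‖c‖ * 1 := mul_le_mul (le_abs_self c) (min_le_right y 1) (by positivity) (norm_nonneg c)
    _ = ‖c‖ := mul_one _

lemma integrableOn_cexp_neg_mul_mul_rpow {a : ℝ} (ha : 0 < a) {r : ℂ} (hr : 0 < r.re) :
    IntegrableOn (fun x : ℝ => Complex.exp (-r * x) * (x ^ (a - 1) : ℝ)) (Ioi 0) := by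
  refine Integrable.of_integral_ne_zero (G := ℂ) ?_
  rw [integral_cexp_neg_mul_mul_rpow ha hr]
  have hr0 : r ≠ 0 := fun h => by simp [h] at hr
  exact mul_ne_zero (mod_cast (Real.Gamma_pos_of_pos ha).ne')
    (fun h => hr0 ((Complex.cpow_eq_zero_iff _ _).1 h).1)

lemma hasDerivAt_ofReal_rpow_one_sub_div {Y x : ℝ} (hY : Y ≠ 1) (hx : x ≠ 0) :
    HasDerivAt (fun x : ℝ => ((x ^ (1 - Y) / (1 - Y) : ℝ) : ℂ)) (x ^ (-Y) : ℝ) x := by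
  have hderiv := ((Real.hasDerivAt_rpow_const (p := 1 - Y)
    (Or.inl hx)).div_const (1 - Y)).ofReal_comp
  rwa [mul_div_cancel_left₀ _ (sub_ne_zero.2 hY.symm), show 1 - Y - 1 = -Y by ring] at hderiv

lemma integral_rpow_smul_cexp_neg_mul_sub_one_by_parts {Y : ℝ} (hY : Y ∈ Ioo 1 2) {r : ℂ}
    (hr : 0 < r.re) :
    ∫ x in Ioi (0 : ℝ), x ^ (-Y) • (Complex.exp (-r * x) - 1)
      = r / (1 - Y) * ∫ x in Ioi (0 : ℝ), Complex.exp (-r * x) * (x ^ (2 - Y - 1) : ℝ) := by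
  have hYC : (1 - Y : ℂ) ≠ 0 := mod_cast (sub_neg.2 hY.1).ne
  have hbound : ∀ x : ℝ, 0 < x → ‖(1 - Y : ℂ)⁻¹ * (Complex.exp (-r * x) - 1)‖ ≤
      ‖(1 - Y : ℂ)⁻¹‖ * max ‖r‖ 2 * min x 1 := fun x hx => by
    rw [norm_mul, mul_assoc]
    gcongr
    exact norm_cexp_neg_mul_sub_one_le hr.le hx.le
  have huv : (fun x : ℝ => (Complex.exp (-r * x) - 1)) *
      (fun x : ℝ => ((x ^ (1 - Y) / (1 - Y) : ℝ) : ℂ))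
      = fun x : ℝ => x ^ (1 - Y) • ((1 - Y : ℂ)⁻¹ * (Complex.exp (-r * x) - 1)) := by
    ext x
    simp only [Pi.mul_apply, Complex.real_smul, Complex.ofReal_div, Complex.ofReal_sub,
      Complex.ofReal_one]
    ring
  have hu'v : ∀ x : ℝ, Complex.exp (-r * x) * -r * ((x ^ (1 - Y) / (1 - Y) : ℝ) : ℂ)
      = -(r / (1 - Y)) * (Complex.exp (-r * x) * (x ^ (2 - Y - 1) : ℝ)) := fun x => by
    rw [show 2 - Y - 1 = 1 - Y by ring, Complex.ofReal_div, Complex.ofReal_sub, Complex.ofReal_one]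
    field_simp
  have huv' : (fun x : ℝ => x ^ (-Y) • (Complex.exp (-r * x) - 1))
      = fun x : ℝ => (Complex.exp (-r * x) - 1) * (x ^ (-Y) : ℝ) := by
    simp only [Complex.real_smul, mul_comm]
  have hint := integrableOn_rpow_smul_cexp_neg_mul_sub_one hY hr.le
  have hint' := (integrableOn_cexp_neg_mul_mul_rpow (a := 2 - Y) (by linarith [hY.2]) hr).const_mul
    (-(r / (1 - Y)))
  simp only [← hu'v] at hint'
  rw [huv'] at hint ⊢
  rw [integral_Ioi_mul_deriv_eq_deriv_mul (v := fun x : ℝ => ((x ^ (1 - Y) / (1 - Y) : ℝ) : ℂ))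
    (a' := 0) (b' := 0) ?_ ?_ hint hint' ?_ ?_]
  · simp only [hu'v, integral_const_mul]
    ring
  · intro x _
    simpa using (((hasDerivAt_id x).ofReal_comp.const_mul (-r)).cexp).sub_const 1
  · exact fun x (hx : 0 < x) => hasDerivAt_ofReal_rpow_one_sub_div hY.1.ne' hx.ne'
  · rw [huv]
    exact tendsto_rpow_one_sub_smul_nhdsGT_zero hY.2 hbound
  · rw [huv]
    exact tendsto_rpow_one_sub_smul_atTop hY.1 hbound

lemma integral_rpow_smul_cexp_neg_mul_sub_one_of_re_pos {Y : ℝ} (hY : Y ∈ Ioo 1 2) {r : ℂ}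
    (hr : 0 < r.re) :
    ∫ x in Ioi (0 : ℝ), x ^ (-Y) • (Complex.exp (-r * x) - 1)
      = Real.Gamma (1 - Y) * r ^ ((Y - 1 : ℝ) : ℂ) := by
  have hYC : (1 - Y : ℂ) ≠ 0 := mod_cast (sub_neg.2 hY.1).ne
  have hr0 : r ≠ 0 := fun h => by simp [h] at hr
  have hGamma : Real.Gamma (2 - Y) = (1 - Y) * Real.Gamma (1 - Y) := by
    rw [← Real.Gamma_add_one (sub_neg.2 hY.1).ne]
    ring_nf
  have hpow : r * r ^ (-((2 - Y : ℝ) : ℂ)) = r ^ ((Y - 1 : ℝ) : ℂ) := by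
    nth_rewrite 1 [← Complex.cpow_one r]
    rw [← Complex.cpow_add _ _ hr0]
    push_cast
    ring_nf
  rw [integral_rpow_smul_cexp_neg_mul_sub_one_by_parts hY hr,
    integral_cexp_neg_mul_mul_rpow (by linarith [hY.2]) hr, hGamma, ← hpow]
  push_cast
  field_simp

theorem integral_rpow_smul_cexp_neg_mul_sub_one {Y : ℝ} (hY : Y ∈ Ioo 1 2) {r : ℂ}
    (hr : 0 ≤ r.re) (hr0 : r ≠ 0) :
    ∫ x in Ioi (0 : ℝ), x ^ (-Y) • (Complex.exp (-r * x) - 1)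
      = Real.Gamma (1 - Y) * r ^ ((Y - 1 : ℝ) : ℂ) := by
  have hshift : Tendsto (fun ε : ℝ => r + ε) (𝓝[>] 0) (𝓝 r) :=
    (Continuous.tendsto' (by fun_prop) 0 r (by simp)).mono_left nhdsWithin_le_nhds
  have hslit : r ∈ Complex.slitPlane := by
    rw [Complex.mem_slitPlane_iff]
    by_contra! h
    exact hr0 (Complex.ext (le_antisymm h.1 hr) h.2)
  have hright : Tendsto (fun ε : ℝ => Real.Gamma (1 - Y) * (r + ε) ^ ((Y - 1 : ℝ) : ℂ)) (𝓝[>] 0)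
      (𝓝 (Real.Gamma (1 - Y) * r ^ ((Y - 1 : ℝ) : ℂ))) :=
    ((continuousAt_cpow_const hslit).tendsto.comp hshift).const_mul _
  have hleft : Tendsto (fun ε : ℝ => ∫ x in Ioi (0 : ℝ), x ^ (-Y) •
      (Complex.exp (-(r + ε) * x) - 1)) (𝓝[>] 0)
      (𝓝 (∫ x in Ioi (0 : ℝ), x ^ (-Y) • (Complex.exp (-r * x) - 1))) := by
    refine tendsto_integral_filter_of_dominated_convergence _
      (Eventually.of_forall fun ε => Measurable.aestronglyMeasurable (by fun_prop)) ?_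
      ((integrableOn_rpow_mul_min_one hY).const_mul (max (‖r‖ + 1) 2)) ?_
    · filter_upwards [Ioo_mem_nhdsGT (zero_lt_one' ℝ)] with ε hε
      filter_upwards [self_mem_ae_restrict measurableSet_Ioi] with x (hx : 0 < x)
      refine norm_rpow_smul_le hx Y ((norm_cexp_neg_mul_sub_one_le ?_ hx.le).trans ?_)
      · simpa using add_nonneg hr hε.1.le
      · gcongr
        refine (norm_add_le _ _).trans ?_
        gcongr
        simpa [abs_of_pos hε.1] using hε.2.le
    · refine Eventually.of_forall fun x => ?_
      have hcont : Continuous fun s : ℂ => x ^ (-Y) • (Complex.exp (-s * x) - 1) := by fun_prop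
      exact (hcont.tendsto r).comp hshift
  refine tendsto_nhds_unique (hleft.congr' ?_) hright
  filter_upwards [self_mem_nhdsWithin] with ε (hε : 0 < ε)
  exact integral_rpow_smul_cexp_neg_mul_sub_one_of_re_pos hY
    (by simpa using add_pos_of_nonneg_of_pos hr hε)

lemma integral_rpow_mul_exp_neg_mul_sub_one {Y : ℝ} (hY : Y ∈ Ioo 1 2) {s : ℝ} (hs : 0 < s) :
    ∫ x in Ioi (0 : ℝ), x ^ (-Y) * (Real.exp (-s * x) - 1) = Real.Gamma (1 - Y) * s ^ (Y - 1) := by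
  have hcomplex := integral_rpow_smul_cexp_neg_mul_sub_one hY (r := s) (by simpa using hs.le)
    (mod_cast hs.ne')
  rw [← Complex.ofReal_cpow hs.le, ← Complex.ofReal_mul] at hcomplex
  rw [← Complex.ofReal_inj, ← hcomplex, ← integral_complex_ofReal]
  simp

end CompensatedIntegrals

/-! ### The positive stable law -/

/-- The characteristic exponent of the compensated one-sided `Y`-stable law with Lévy density
`C * x ^ (-Y - 1)` on `(0, ∞)`, with the power taken on the principal branch. -/
noncomputable def stableExponent (Y C u : ℝ) : ℂ :=
  C * Real.Gamma (-Y) * (-(Complex.I * u)) ^ (Y : ℂ)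

/-- `μ` is the centered, totally positively skewed `Y`-stable law of intensity `C`. -/
def IsPositiveStable (Y C : ℝ) (μ : Measure ℝ) : Prop :=
  ∀ u : ℝ, charFun μ u = Complex.exp (stableExponent Y C u)

lemma neg_I_mul_cpow (Y : ℝ) {u : ℝ} (hu : u ≠ 0) :
    (-(Complex.I * u)) ^ (Y : ℂ) = (|u| ^ Y : ℝ) *
      ((Real.cos (Real.pi * Y / 2) : ℝ)
        - Complex.I * (Real.sign u : ℝ) * (Real.sin (Real.pi * Y / 2) : ℝ)) := by
  have hpos : 0 < |u| := abs_pos.2 hu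
  have hlog : Complex.log (-(Complex.I * u))
      = (Real.log |u| : ℝ) + ((-(Real.sign u) * Real.pi / 2 : ℝ) : ℂ) * Complex.I := by
    rcases hu.lt_or_gt with hneg | hpos'
    · have harg : -(Complex.I * (u : ℂ)) = (|u| : ℝ) * Complex.I := by
        rw [abs_of_neg hneg]
        push_cast
        ring
      rw [harg, Complex.log_ofReal_mul hpos Complex.I_ne_zero, Complex.log_I, Real.sign_of_neg hneg]
      push_cast
      ring
    · have harg : -(Complex.I * (u : ℂ)) = (|u| : ℝ) * -Complex.I := by
        rw [abs_of_pos hpos']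
        ring
      rw [harg, Complex.log_ofReal_mul hpos (by simp), Complex.log_neg_I, Real.sign_of_pos hpos']
      push_cast
      ring
  have hphase : ((-(Real.sign u) * Real.pi / 2 : ℝ) : ℂ) * Complex.I * Y
      = ((-(Real.sign u) * (Real.pi * Y / 2) : ℝ) : ℂ) * Complex.I := by
    push_cast
    ring
  rw [Complex.cpow_def_of_ne_zero (by simp [hu]), hlog, add_mul, Complex.exp_add, hphase,
    Complex.exp_mul_I, ← Complex.ofReal_cos, ← Complex.ofReal_sin, Real.rpow_def_of_pos hpos,
    Complex.ofReal_exp, Complex.ofReal_mul]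
  rcases hu.lt_or_gt with hneg | hpos'
  · rw [Real.sign_of_neg hneg, neg_neg, one_mul]
    push_cast
    ring
  · rw [Real.sign_of_pos hpos', neg_one_mul, Real.cos_neg, Real.sin_neg]
    push_cast
    ring

lemma stableExponent_eq {Y : ℝ} (hY : Y ≠ 0) (C u : ℝ) :
    stableExponent Y C u = (C * Real.Gamma (-Y) * |u| ^ Y : ℝ) *
      ((Real.cos (Real.pi * Y / 2) : ℝ)
        - Complex.I * (Real.sign u : ℝ) * (Real.sin (Real.pi * Y / 2) : ℝ)) := by
  rw [stableExponent]
  rcases eq_or_ne u 0 with rfl | hu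
  · simp [hY]
  · rw [neg_I_mul_cpow Y hu]
    push_cast
    ring

lemma norm_stableExponent (Y C u : ℝ) :
    ‖stableExponent Y C u‖ = |C * Real.Gamma (-Y)| * |u| ^ Y := by
  rw [stableExponent, norm_mul, Complex.norm_cpow_real, norm_neg, norm_mul, norm_mul,
    Complex.norm_I, one_mul, Complex.norm_real, Complex.norm_real, Complex.norm_real, abs_mul]
  rfl

lemma hasDerivAt_stableExponent {Y : ℝ} (hY : Y ∈ Ioo 1 2) (C : ℝ) {u : ℝ} (hu : u ≠ 0) :
    HasDerivAt (stableExponent Y C)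
      (Complex.I * C * ∫ y in Ioi (0 : ℝ), y ^ (-Y) • (Complex.exp (u * y * Complex.I) - 1)) u := by
  have hslit : -(Complex.I * (u : ℂ)) ∈ Complex.slitPlane :=
    Complex.mem_slitPlane_iff.2 (Or.inr (by simpa using hu))
  have hinner : HasDerivAt (fun z : ℂ => -(Complex.I * z)) (-Complex.I) u := by
    simpa using ((hasDerivAt_id (u : ℂ)).const_mul Complex.I).fun_neg
  have hGamma : Real.Gamma (1 - Y) = -Y * Real.Gamma (-Y) := by
    rw [← Real.Gamma_add_one (by linarith [hY.1]), neg_add_eq_sub]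
  have hpow : ∫ y in Ioi (0 : ℝ), y ^ (-Y) • (Complex.exp (u * y * Complex.I) - 1)
      = Real.Gamma (1 - Y) * (-(Complex.I * u)) ^ ((Y - 1 : ℝ) : ℂ) := by
    rw [← integral_rpow_smul_cexp_neg_mul_sub_one hY (by simp) (by simp [hu])]
    simp only [neg_neg, mul_comm, mul_left_comm]
  rw [hpow, hGamma]
  convert! ((hinner.cpow_const (c := (Y : ℂ)) hslit).comp_ofReal).const_mul
    (C * Real.Gamma (-Y) : ℂ) using 1
  push_cast
  ring

section TailBounds

variable {μ : Measure ℝ} [IsProbabilityMeasure μ]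

lemma measureReal_lt_abs_le_of_norm_one_sub_charFun_le {K Y : ℝ} (hK : 0 ≤ K) (hY : 0 ≤ Y)
    (hchar : ∀ t : ℝ, ‖1 - charFun μ t‖ ≤ K * |t| ^ Y) {r : ℝ} (hr : 0 < r) :
    μ.real {x | r < |x|} ≤ 2 * K * 2 ^ Y * r ^ (-Y) := by
  have hint : ‖∫ t in (-2 * r⁻¹)..(2 * r⁻¹), 1 - charFun μ t‖
      ≤ K * (2 * r⁻¹) ^ Y * |2 * r⁻¹ - -2 * r⁻¹| := by
    refine intervalIntegral.norm_integral_le_of_norm_le_const fun t ht => (hchar t).trans ?_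
    rw [uIoc_of_le (by nlinarith [inv_pos.2 hr])] at ht
    gcongr
    exact abs_le.2 ⟨by linarith [ht.1], ht.2⟩
  calc μ.real {x | r < |x|}
      ≤ 2⁻¹ * r * ‖∫ t in (-2 * r⁻¹)..(2 * r⁻¹), 1 - charFun μ t‖ :=
        measureReal_abs_gt_le_integral_charFun hr
    _ ≤ 2⁻¹ * r * (K * (2 * r⁻¹) ^ Y * |2 * r⁻¹ - -2 * r⁻¹|) := by gcongr
    _ = 2 * K * 2 ^ Y * r ^ (-Y) := by
        rw [show 2 * r⁻¹ - -2 * r⁻¹ = 4 * r⁻¹ by ring, abs_of_pos (by positivity),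
          Real.mul_rpow zero_le_two (by positivity), Real.inv_rpow hr.le, ← Real.rpow_neg hr.le]
        field_simp
        ring

lemma integrable_id_of_measureReal_lt_abs_le {K Y : ℝ} (hY : 1 < Y)
    (htail : ∀ r, 0 < r → μ.real {x | r < |x|} ≤ K * r ^ (-Y)) : Integrable id μ := by
  refine ⟨aestronglyMeasurable_id, ?_⟩
  have hnear : ∫⁻ r in Ioc 0 1, μ {x : ℝ | r < |x|} < ⊤ :=
    setLIntegral_lt_top_of_le_nnreal (by simp) ⟨1, fun r _ => prob_le_one⟩
  have hfar : ∫⁻ r in Ioi 1, μ {x : ℝ | r < |x|} < ⊤ := by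
    have hint : IntegrableOn (fun r : ℝ => K * r ^ (-Y)) (Ioi 1) :=
      (integrableOn_Ioi_rpow_of_lt (neg_lt_neg hY) one_pos).const_mul K
    refine lt_of_le_of_lt (setLIntegral_mono_ae (by fun_prop) (ae_of_all _ fun r hr => ?_))
      hint.lintegral_lt_top
    rw [← ofReal_measureReal]
    exact ENNReal.ofReal_le_ofReal (htail r (one_pos.trans hr))
  rw [hasFiniteIntegral_iff_norm]
  simp only [id, Real.norm_eq_abs]
  rw [lintegral_eq_lintegral_meas_lt μ (ae_of_all _ fun x => abs_nonneg x) (by fun_prop),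
    ← Ioc_union_Ioi_eq_Ioi zero_le_one]
  exact (lintegral_union_le _ _ _).trans_lt (ENNReal.add_lt_top.2 ⟨hnear, hfar⟩)

end TailBounds

namespace IsPositiveStable

variable {Y C : ℝ} {μ : Measure ℝ} [IsProbabilityMeasure μ]

lemma re_stableExponent_nonpos (hμ : IsPositiveStable Y C μ) (u : ℝ) :
    (stableExponent Y C u).re ≤ 0 := by
  rw [← Real.exp_le_one_iff, ← Complex.norm_exp, ← hμ u]
  exact norm_charFun_le_one u

lemma norm_one_sub_charFun_le (hμ : IsPositiveStable Y C μ) (u : ℝ) :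
    ‖1 - charFun μ u‖ ≤ |C * Real.Gamma (-Y)| * |u| ^ Y := by
  rw [← norm_stableExponent, norm_sub_rev, hμ u]
  exact norm_cexp_sub_one_le (hμ.re_stableExponent_nonpos u)

lemma measureReal_lt_abs_le (hμ : IsPositiveStable Y C μ) (hY : 0 ≤ Y) {r : ℝ} (hr : 0 < r) :
    μ.real {x | r < |x|} ≤ 2 * |C * Real.Gamma (-Y)| * 2 ^ Y * r ^ (-Y) :=
  measureReal_lt_abs_le_of_norm_one_sub_charFun_le (abs_nonneg _) hY hμ.norm_one_sub_charFun_le hr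

lemma integrable_id (hμ : IsPositiveStable Y C μ) (hY : 1 < Y) : Integrable id μ :=
  integrable_id_of_measureReal_lt_abs_le hY fun _ hr =>
    hμ.measureReal_lt_abs_le (one_pos.trans hY).le hr

end IsPositiveStable

/-! ### Stein's identity -/

section Marchaud

variable {E : Type*} [NormedAddCommGroup E] [NormedSpace ℝ E]

/-- The right-sided Marchaud fractional derivative of order `Y - 1`, without its normalizing
constant. -/
noncomputable def marchaud (Y : ℝ) (f : ℝ → E) (x : ℝ) : E :=
  ∫ y in Ioi (0 : ℝ), y ^ (-Y) • (f (x + y) - f x)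

lemma norm_marchaud_le {Y c : ℝ} (hY : Y ∈ Ioo 1 2) {f : ℝ → E} {x : ℝ}
    (hf : ∀ y, 0 < y → ‖f (x + y) - f x‖ ≤ c * min y 1) :
    ‖marchaud Y f x‖ ≤ c * ∫ y in Ioi (0 : ℝ), y ^ (-Y) * min y 1 :=
  norm_setIntegral_rpow_smul_le hY hf

lemma stronglyMeasurable_marchaud (Y : ℝ) {f : ℝ → E} (hf : StronglyMeasurable f) :
    StronglyMeasurable (marchaud Y f) := by
  have hweight : StronglyMeasurable fun p : ℝ × ℝ => p.2 ^ (-Y) :=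
    Measurable.stronglyMeasurable (by fun_prop)
  exact (hweight.smul ((hf.comp_measurable measurable_add).sub
    (hf.comp_measurable measurable_fst))).integral_prod_right'

lemma integrable_marchaud {μ : Measure ℝ} [IsFiniteMeasure μ] {Y c : ℝ} (hY : Y ∈ Ioo 1 2)
    {f : ℝ → E} (hmeas : StronglyMeasurable f)
    (hf : ∀ x y, 0 < y → ‖f (x + y) - f x‖ ≤ c * min y 1) : Integrable (marchaud Y f) μ :=
  .of_bound (stronglyMeasurable_marchaud Y hmeas).aestronglyMeasurable _
    (ae_of_all _ fun x => norm_marchaud_le hY (hf x))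

lemma tendsto_integral_marchaud {μ : Measure ℝ} [IsFiniteMeasure μ] {Y c : ℝ} (hY : Y ∈ Ioo 1 2)
    {F : ℕ → ℝ → E} {f : ℝ → E} (hmeas : ∀ n, StronglyMeasurable (F n))
    (hF : ∀ n x y, 0 < y → ‖F n (x + y) - F n x‖ ≤ c * min y 1)
    (hlim : ∀ x, Tendsto (fun n => F n x) atTop (𝓝 (f x))) :
    Tendsto (fun n => ∫ x, marchaud Y (F n) x ∂μ) atTop (𝓝 (∫ x, marchaud Y f x ∂μ)) := by
  refine tendsto_integral_of_dominated_convergence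
    (fun _ => c * ∫ y in Ioi (0 : ℝ), y ^ (-Y) * min y 1)
    (fun n => (stronglyMeasurable_marchaud Y (hmeas n)).aestronglyMeasurable) (integrable_const _)
    (fun n => ae_of_all _ fun x => norm_marchaud_le hY (hF n x)) (ae_of_all _ fun x => ?_)
  refine tendsto_integral_of_dominated_convergence (fun y => c * (y ^ (-Y) * min y 1))
    (fun n => ?_) ((integrableOn_rpow_mul_min_one hY).const_mul c) (fun n => ?_)
    (ae_of_all _ fun y => ((hlim (x + y)).sub (hlim x)).const_smul _)
  · have hweight : Measurable fun y : ℝ => y ^ (-Y) := by fun_prop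
    have hshift : Measurable fun y : ℝ => x + y := by fun_prop
    exact hweight.aestronglyMeasurable.smul
      (((hmeas n).comp_measurable hshift).sub stronglyMeasurable_const).aestronglyMeasurable
  · filter_upwards [self_mem_ae_restrict measurableSet_Ioi] with y (hy : 0 < y)
    exact norm_rpow_smul_le hy Y (hF n x y hy)

end Marchaud

lemma integral_integral_swap_of_norm_le_mul {α β E : Type*} [MeasurableSpace α] [MeasurableSpace β]
    [NormedAddCommGroup E] [NormedSpace ℝ E] {ν : Measure α} {ρ : Measure β} [SFinite ν] [SFinite ρ]
    {k : α → β → E} {b : α → ℝ} {w : β → ℝ}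
    (hk : AEStronglyMeasurable (Function.uncurry k) (ν.prod ρ)) (hb : Integrable b ν)
    (hw : Integrable w ρ) (hbound : ∀ᵐ a ∂ν, ∀ x, ‖k a x‖ ≤ b a * w x) :
    ∫ a, ∫ x, k a x ∂ρ ∂ν = ∫ x, ∫ a, k a x ∂ν ∂ρ := by
  refine integral_integral_swap ((hb.mul_prod hw).mono' hk ?_)
  filter_upwards [Measure.quasiMeasurePreserving_fst.ae hbound] with p hp
  exact hp p.2

section PlaneWaves

/-- The plane wave of frequency `u`, the test function from which all others are superposed. -/
noncomputable def planeWave (u x : ℝ) : ℂ := Complex.exp (u * x * Complex.I)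

@[fun_prop]
lemma measurable_planeWave_uncurry : Measurable (Function.uncurry planeWave) := by
  unfold planeWave Function.uncurry
  fun_prop

lemma norm_planeWave (u x : ℝ) : ‖planeWave u x‖ = 1 := by
  rw [planeWave, ← Complex.ofReal_mul, Complex.norm_exp_ofReal_mul_I]

lemma planeWave_add (u x y : ℝ) : planeWave u (x + y) = planeWave u x * planeWave u y := by
  simp only [planeWave, ← Complex.exp_add]
  push_cast
  ring_nf

lemma norm_planeWave_sub_one_le (u : ℝ) {y : ℝ} (hy : 0 ≤ y) :
    ‖planeWave u y - 1‖ ≤ max |u| 2 * min y 1 := by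
  have hwave : planeWave u y = Complex.exp (-(-(u * Complex.I)) * y) := by
    rw [planeWave, neg_neg, mul_right_comm]
  rw [hwave]
  simpa using norm_cexp_neg_mul_sub_one_le (r := -(u * Complex.I)) (by simp) hy

lemma norm_planeWave_add_sub_le (u x : ℝ) {y : ℝ} (hy : 0 ≤ y) :
    ‖planeWave u (x + y) - planeWave u x‖ ≤ max |u| 2 * min y 1 := by
  rw [planeWave_add, ← mul_sub_one, norm_mul, norm_planeWave, one_mul]
  exact norm_planeWave_sub_one_le u hy

lemma marchaud_planeWave (Y u x : ℝ) :
    marchaud Y (planeWave u) x = planeWave u x *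
      ∫ y in Ioi (0 : ℝ), y ^ (-Y) • (planeWave u y - 1) := by
  rw [marchaud, ← integral_const_mul]
  congr with y
  rw [planeWave_add, ← mul_sub_one, mul_smul_comm]

lemma measurable_marchaud_planeWave (Y : ℝ) :
    Measurable fun p : ℝ × ℝ => marchaud Y (planeWave p.1) p.2 := by
  have hintegrand : StronglyMeasurable fun p : ℝ × ℝ => p.2 ^ (-Y) • (planeWave p.1 p.2 - 1) :=
    Measurable.stronglyMeasurable (by fun_prop)
  have hsymbol := hintegrand.integral_prod_right' (ν := volume.restrict (Ioi 0)).measurable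
  simp only [marchaud_planeWave]
  exact measurable_planeWave_uncurry.mul (hsymbol.comp measurable_fst)

variable {β : Type*} [MeasurableSpace β] {ρ : Measure β} {g : β → ℂ} {θ : β → ℝ}

lemma integrable_superposition (hg : Integrable g ρ) (hθ : Measurable θ) (x : ℝ) :
    Integrable (fun a => g a * planeWave (θ a) x) ρ :=
  hg.mul_bdd (c := 1) ((measurable_planeWave_uncurry.comp
    (hθ.prodMk measurable_const)).aestronglyMeasurable) (by simp [norm_planeWave])

variable [SFinite ρ]

lemma marchaud_superposition {Y : ℝ} (hY : Y ∈ Ioo 1 2) (hg : Integrable g ρ) (hθ : Measurable θ)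
    (hgθ : Integrable (fun a => ‖g a‖ * max |θ a| 2) ρ) (x : ℝ) :
    marchaud Y (fun x => ∫ a, g a * planeWave (θ a) x ∂ρ) x
      = ∫ a, g a * marchaud Y (planeWave (θ a)) x ∂ρ := by
  simp only [marchaud, ← integral_const_mul,
    ← integral_sub (integrable_superposition hg hθ _) (integrable_superposition hg hθ _),
    ← mul_sub, ← integral_smul, ← mul_smul_comm]
  refine integral_integral_swap_of_norm_le_mul ?_ (integrableOn_rpow_mul_min_one hY) hgθ ?_
  · have hweight : Measurable fun p : ℝ × β =>
        p.1 ^ (-Y) • (planeWave (θ p.2) (x + p.1) - planeWave (θ p.2) x) := by fun_prop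
    exact hg.aestronglyMeasurable.comp_snd.mul hweight.aestronglyMeasurable
  · filter_upwards [self_mem_ae_restrict measurableSet_Ioi] with y (hy : 0 < y) a
    rw [norm_mul, mul_left_comm, mul_comm (y ^ (-Y) * min y 1)]
    gcongr
    exact norm_rpow_smul_le hy Y (norm_planeWave_add_sub_le (θ a) x hy.le)

lemma integral_marchaud_superposition {μ : Measure ℝ} [IsFiniteMeasure μ] {Y : ℝ} (hY : Y ∈ Ioo 1 2)
    (hg : Integrable g ρ) (hθ : Measurable θ)
    (hgθ : Integrable (fun a => ‖g a‖ * max |θ a| 2) ρ) :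
    ∫ x, marchaud Y (fun x => ∫ a, g a * planeWave (θ a) x ∂ρ) x ∂μ
      = ∫ a, g a * ∫ x, marchaud Y (planeWave (θ a)) x ∂μ ∂ρ := by
  simp only [marchaud_superposition hY hg hθ hgθ, ← integral_const_mul]
  refine integral_integral_swap_of_norm_le_mul (b := fun _ => 1)
    (hg.aestronglyMeasurable.comp_snd.mul ?_) (integrable_const 1)
    (hgθ.mul_const (∫ y in Ioi (0 : ℝ), y ^ (-Y) * min y 1)) (ae_of_all _ fun x a => ?_)
  · exact ((measurable_marchaud_planeWave Y).comp
      (by fun_prop : Measurable fun p : ℝ × β => (θ p.2, p.1))).aestronglyMeasurable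
  · rw [norm_mul, one_mul, mul_assoc]
    gcongr
    exact norm_marchaud_le hY fun y hy => norm_planeWave_add_sub_le (θ a) x hy.le

lemma integral_mul_superposition_swap {μ : Measure ℝ} [IsFiniteMeasure μ] (hμ : Integrable id μ)
    (hg : Integrable g ρ) (hθ : Measurable θ) :
    ∫ x, x * ∫ a, g a * planeWave (θ a) x ∂ρ ∂μ = ∫ a, g a * ∫ x, x * planeWave (θ a) x ∂μ ∂ρ := by
  simp only [← integral_const_mul, mul_left_comm _ (g _)]
  refine integral_integral_swap_of_norm_le_mul ?_ hμ.norm hg.norm (ae_of_all _ fun x a => ?_)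
  · have hwave : Measurable fun p : ℝ × β => (p.1 : ℂ) * planeWave (θ p.2) p.1 := by fun_prop
    exact hg.aestronglyMeasurable.comp_snd.mul hwave.aestronglyMeasurable
  · simp [norm_planeWave, mul_comm]

end PlaneWaves

namespace IsPositiveStable

variable {Y C : ℝ} {μ : Measure ℝ} [IsProbabilityMeasure μ]

lemma integral_mul_planeWave (hμ : IsPositiveStable Y C μ) (hY : Y ∈ Ioo 1 2) {u : ℝ} (hu : u ≠ 0) :
    ∫ x, x * planeWave u x ∂μ = C * ∫ x, marchaud Y (planeWave u) x ∂μ := by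
  have hmoment := iteratedDeriv_charFun (n := 1) (t := u)
    (by simpa using memLp_one_iff_integrable.2 (hμ.integrable_id hY.1))
  have hderiv : HasDerivAt (charFun μ) _ u :=
    ((hasDerivAt_stableExponent hY C hu).cexp).congr_of_eventuallyEq (.of_forall hμ)
  simp only [iteratedDeriv_one, hderiv.deriv, pow_one, ← hμ u] at hmoment
  simp only [marchaud_planeWave, integral_mul_const]
  refine mul_left_cancel₀ Complex.I_ne_zero ?_
  simp only [planeWave, ← charFun_apply_real, ← hmoment]
  ring

theorem integral_mul_superposition {β : Type*} [MeasurableSpace β] {ρ : Measure β} [SFinite ρ]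
    {g : β → ℂ} {θ : β → ℝ} (hμ : IsPositiveStable Y C μ) (hY : Y ∈ Ioo 1 2) (hg : Integrable g ρ)
    (hθ : Measurable θ) (hθ0 : ∀ᵐ a ∂ρ, θ a ≠ 0)
    (hgθ : Integrable (fun a => ‖g a‖ * max |θ a| 2) ρ) :
    ∫ x, x * ∫ a, g a * planeWave (θ a) x ∂ρ ∂μ
      = C * ∫ x, marchaud Y (fun x => ∫ a, g a * planeWave (θ a) x ∂ρ) x ∂μ := by
  rw [integral_mul_superposition_swap (hμ.integrable_id hY.1) hg hθ,
    integral_marchaud_superposition hY hg hθ hgθ, ← integral_const_mul]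
  refine integral_congr_ae ?_
  filter_upwards [hθ0] with a ha
  rw [hμ.integral_mul_planeWave hY ha]
  ring

open FourierTransform SchwartzMap in
lemma integral_mul_schwartzMap (hμ : IsPositiveStable Y C μ) (hY : Y ∈ Ioo 1 2) (f : 𝓢(ℝ, ℂ)) :
    ∫ x, x * f x ∂μ = C * ∫ x, marchaud Y f x ∂μ := by
  have hinv : (f : ℝ → ℂ) = fun x => ∫ ξ, (𝓕 f) ξ * planeWave (2 * Real.pi * ξ) x := by
    ext x
    conv_lhs =>
      rw [← FourierTransform.fourierInv_fourier_eq (F := 𝓢(ℝ, ℂ)) f, fourierInv_coe,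
        Real.fourierInv_eq']
    congr with ξ
    simp [planeWave, mul_comm, mul_left_comm, mul_assoc]
  have hweight : Integrable fun ξ => ‖(𝓕 f) ξ‖ * max |2 * Real.pi * ξ| 2 := by
    have hmom := ((𝓕 f).integrable_pow_mul volume 1).const_mul (2 * Real.pi)
    refine (hmom.add ((𝓕 f).integrable.norm.const_mul 2)).mono'
      (Continuous.aestronglyMeasurable (by fun_prop)) (ae_of_all _ fun ξ => ?_)
    rw [Real.norm_of_nonneg (by positivity)]
    calc ‖(𝓕 f) ξ‖ * max |2 * Real.pi * ξ| 2
        ≤ ‖(𝓕 f) ξ‖ * (|2 * Real.pi * ξ| + 2) := by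
          gcongr
          exact max_le_add_of_nonneg (abs_nonneg _) zero_le_two
      _ = 2 * Real.pi * (‖ξ‖ ^ 1 * ‖(𝓕 f) ξ‖) + 2 * ‖(𝓕 f) ξ‖ := by
          rw [abs_mul, abs_of_pos Real.two_pi_pos, Real.norm_eq_abs]
          ring
  rw [hinv]
  refine hμ.integral_mul_superposition hY (𝓕 f).integrable (by fun_prop) ?_ hweight
  filter_upwards [Measure.ae_ne volume (0:ℝ)] with ξ hξ
  have := Real.pi_pos
  positivity

end IsPositiveStable

section Cutoff

lemma exists_abs_add_sub_le_mul_min_one_of_contDiffBump (χ : ContDiffBump (0 : ℝ)) :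
    ∃ L, ∀ n : ℕ, ∀ x y : ℝ, 0 < y →
      |χ ((x + y) / (n + 1)) - χ (x / (n + 1))| ≤ L * min y 1 := by
  obtain ⟨K, hK⟩ := (χ.contDiff (n := 1)).lipschitzWith_of_hasCompactSupport
    χ.hasCompactSupport one_ne_zero
  refine ⟨max K 1, fun n x y hy => le_max_mul_min_one hy.le ?_ ?_⟩
  · calc |χ ((x + y) / (n + 1)) - χ (x / (n + 1))|
        ≤ K * |(x + y) / (n + 1) - x / (n + 1)| := hK.dist_le_mul _ _
      _ = K * (y / (n + 1)) := by
          rw [← sub_div, add_sub_cancel_left, abs_of_nonneg (by positivity)]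
      _ ≤ K * y := by
          gcongr
          exact div_le_self hy.le (by linarith [n.cast_nonneg (α := ℝ)])
  · simpa using abs_sub_le_of_le_of_le χ.nonneg χ.le_one χ.nonneg (χ.le_one (x := x / (n + 1)))

lemma abs_mul_sub_mul_le {a a' b b' A m L M : ℝ} (ha : |a| ≤ A) (haa' : |a' - a| ≤ L * m)
    (hb' : |b'| ≤ 1) (hbb' : |b' - b| ≤ M * m) : |a' * b' - a * b| ≤ (L + A * M) * m := by
  calc |a' * b' - a * b| = |(a' - a) * b' + a * (b' - b)| := by ring_nf
    _ ≤ |a' - a| * |b'| + |a| * |b' - b| := by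
        simpa only [abs_mul] using abs_add_le ((a' - a) * b') (a * (b' - b))
    _ ≤ L * m * 1 + A * (M * m) :=
        add_le_add (mul_le_mul haa' hb' (abs_nonneg _) ((abs_nonneg _).trans haa'))
          (mul_le_mul ha hbb' (abs_nonneg _) ((abs_nonneg _).trans ha))
    _ = (L + A * M) * m := by ring

lemma tendsto_mul_contDiffBump_div (χ : ContDiffBump (0 : ℝ)) (c x : ℝ) :
    Tendsto (fun n : ℕ => c * χ (x / (n + 1))) atTop (𝓝 c) := by
  have hscale : Tendsto (fun n : ℕ => x / ((n : ℝ) + 1)) atTop (𝓝 0) := by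
    simpa [div_eq_mul_inv] using tendsto_one_div_add_atTop_nhds_zero_nat.const_mul x
  have hone : χ (0 : ℝ) = 1 := χ.one_of_mem_closedBall (by simp [χ.rIn_pos.le])
  simpa [hone] using ((χ.continuous.tendsto 0).comp hscale).const_mul c

end Cutoff

namespace IsPositiveStable

open scoped ContDiff

variable {Y C : ℝ} {μ : Measure ℝ} [IsProbabilityMeasure μ]

lemma integral_mul_of_hasCompactSupport (hμ : IsPositiveStable Y C μ) (hY : Y ∈ Ioo 1 2)
    {f : ℝ → ℝ} (hf : ContDiff ℝ ∞ f) (hsupp : HasCompactSupport f) :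
    ∫ x, x * f x ∂μ = C * ∫ x, marchaud Y f x ∂μ := by
  have hcomplex : ∫ x, (x : ℂ) * f x ∂μ = C * ∫ x, marchaud Y (fun x => (f x : ℂ)) x ∂μ :=
    hμ.integral_mul_schwartzMap hY ((hsupp.comp_left Complex.ofReal_zero).toSchwartzMap
      (Complex.ofRealCLM.contDiff.comp hf))
  have hmarchaud : ∀ x, marchaud Y (fun x => (f x : ℂ)) x = (marchaud Y f x : ℝ) := fun x => by
    simp only [marchaud, ← integral_complex_ofReal, Complex.real_smul, smul_eq_mul,
      Complex.ofReal_mul, Complex.ofReal_sub]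
  simp only [hmarchaud] at hcomplex
  exact_mod_cast hcomplex

/-- Stein's identity, which expresses that the Lévy measure of `μ` is `C * y ^ (-Y - 1) dy`. -/
theorem integral_mul_eq (hμ : IsPositiveStable Y C μ) (hY : Y ∈ Ioo 1 2) {f : ℝ → ℝ} {B c : ℝ}
    (hf : ContDiff ℝ ∞ f) (hB : ∀ x, |f x| ≤ B)
    (hc : ∀ x y, 0 < y → |f (x + y) - f x| ≤ c * min y 1) :
    ∫ x, x * f x ∂μ = C * ∫ x, marchaud Y f x ∂μ := by
  let χ : ContDiffBump (0 : ℝ) := ⟨1, 2, one_pos, one_lt_two⟩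
  obtain ⟨L, hL⟩ := exists_abs_add_sub_le_mul_min_one_of_contDiffBump χ
  let F (n : ℕ) (x : ℝ) : ℝ := f x * χ (x / (n + 1))
  have hF : ∀ n, ContDiff ℝ ∞ (F n) := fun n =>
    hf.mul (χ.contDiff.comp (contDiff_id.div_const _))
  have hsupp : ∀ n, HasCompactSupport (F n) := fun n => by
    have hn : ((n : ℝ) + 1)⁻¹ ≠ 0 := by positivity
    simpa [F, div_eq_inv_mul, Pi.mul_def] using
      (χ.hasCompactSupport.comp_smul hn).mul_left (f := f)
  have hχ : ∀ (n : ℕ) x, |χ (x / ((n : ℝ) + 1))| ≤ 1 := fun n x => by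
    rw [abs_of_nonneg χ.nonneg]
    exact χ.le_one
  have hFB : ∀ n x, |F n x| ≤ B := fun n x =>
    calc |F n x| = |f x| * |χ (x / (n + 1))| := abs_mul _ _
      _ ≤ |f x| := mul_le_of_le_one_right (abs_nonneg _) (hχ n x)
      _ ≤ B := hB x
  have hlim : ∀ x, Tendsto (fun n => F n x) atTop (𝓝 (f x)) := fun x =>
    tendsto_mul_contDiffBump_div χ (f x) x
  have hleft : Tendsto (fun n => ∫ x, x * F n x ∂μ) atTop (𝓝 (∫ x, x * f x ∂μ)) := by
    refine tendsto_integral_of_dominated_convergence (fun x => |x| * B)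
      (fun n => (continuous_id.mul (hF n).continuous).aestronglyMeasurable)
      ((hμ.integrable_id hY.1).norm.mul_const B) (fun n => ae_of_all _ fun x => ?_)
      (ae_of_all _ fun x => (hlim x).const_mul x)
    rw [norm_mul]
    exact mul_le_mul_of_nonneg_left (hFB n x) (abs_nonneg x)
  have hright := (tendsto_integral_marchaud (μ := μ) hY
    (fun n => (hF n).continuous.stronglyMeasurable) (fun n x y hy =>
      abs_mul_sub_mul_le (hB x) (hc x y hy) (hχ n (x + y)) (hL n x y hy)) hlim).const_mul C
  refine tendsto_nhds_unique hleft (hright.congr fun n => ?_)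
  exact (hμ.integral_mul_of_hasCompactSupport hY (hF n) (hsupp n)).symm

end IsPositiveStable

/-! ### Exponential moments -/

lemma abs_exp_neg_mul_sub_one_le {l y : ℝ} (hl : 0 ≤ l) (hy : 0 ≤ y) :
    |Real.exp (-l * y) - 1| ≤ max l 1 * min y 1 := by
  have hle : Real.exp (-l * y) ≤ 1 := Real.exp_le_one_iff.2 (by nlinarith)
  rw [abs_sub_comm, abs_of_nonneg (sub_nonneg.2 hle)]
  exact le_max_mul_min_one hy (by linarith [Real.add_one_le_exp (-l * y)])
    (by linarith [Real.exp_pos (-l * y)])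

lemma mul_Gamma_mul_rpow_le_marchaud {Y l x : ℝ} (hY : Y ∈ Ioo 1 2) (hl : 0 < l) {f : ℝ → ℝ}
    (hmeas : Measurable f) (hx : 0 ≤ f x) (hanti : ∀ y, 0 < y → f (x + y) ≤ f x)
    (hdecay : ∀ y, 0 < y → Real.exp (-l * y) * f x ≤ f (x + y)) :
    f x * (Real.Gamma (1 - Y) * l ^ (Y - 1)) ≤ marchaud Y f x := by
  have hexp : ∀ y, 0 < y → ‖f x * (Real.exp (-l * y) - 1)‖ ≤ f x * max l 1 * min y 1 := by
    intro y hy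
    rw [norm_mul, Real.norm_of_nonneg hx, mul_assoc]
    gcongr
    exact abs_exp_neg_mul_sub_one_le hl.le hy.le
  have hinc : ∀ y, 0 < y → ‖f (x + y) - f x‖ ≤ f x * max l 1 * min y 1 := by
    intro y hy
    refine le_trans ?_ (hexp y hy)
    rw [Real.norm_of_nonpos (sub_nonpos.2 (hanti y hy))]
    exact le_trans (by linarith [hdecay y hy]) (neg_le_abs _)
  rw [← integral_rpow_mul_exp_neg_mul_sub_one hY hl, ← integral_const_mul, marchaud]
  simp only [mul_left_comm (f x)]
  refine setIntegral_mono_on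
    (integrableOn_rpow_smul_of_norm_le hY (Measurable.aestronglyMeasurable (by fun_prop)) hexp)
    (integrableOn_rpow_smul_of_norm_le hY (Measurable.aestronglyMeasurable (by fun_prop)) hinc)
    measurableSet_Ioi fun y (hy : 0 < y) => ?_
  rw [smul_eq_mul]
  gcongr
  linarith [hdecay y hy]

section TruncatedExponential

/-- A bounded smooth decreasing function which increases to `x ↦ exp (-l * x)` as `δ` decreases
to `0`. -/
noncomputable def truncatedExp (l δ x : ℝ) : ℝ := (Real.exp (l * x) + δ)⁻¹

variable {l δ : ℝ}

lemma truncatedExp_pos (hδ : 0 < δ) (x : ℝ) : 0 < truncatedExp l δ x := by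
  unfold truncatedExp
  positivity

lemma abs_truncatedExp_le_inv (hδ : 0 < δ) (x : ℝ) : |truncatedExp l δ x| ≤ δ⁻¹ := by
  rw [abs_of_pos (truncatedExp_pos hδ x)]
  exact inv_anti₀ hδ (le_add_of_nonneg_left (Real.exp_pos _).le)

lemma truncatedExp_le_exp (hδ : 0 < δ) (x : ℝ) : truncatedExp l δ x ≤ Real.exp (-(l * x)) := by
  rw [Real.exp_neg]
  exact inv_anti₀ (Real.exp_pos _) (le_add_of_nonneg_right hδ.le)

open scoped ContDiff in
lemma contDiff_truncatedExp (hδ : 0 < δ) : ContDiff ℝ ∞ (truncatedExp l δ) := by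
  refine ContDiff.inv (by fun_prop) fun x => ?_
  positivity

lemma truncatedExp_antitone (hl : 0 ≤ l) (hδ : 0 < δ) : Antitone (truncatedExp l δ) := by
  intro x y hxy
  unfold truncatedExp
  gcongr

lemma exp_neg_mul_mul_truncatedExp_le (hl : 0 ≤ l) (hδ : 0 < δ) (x : ℝ) {y : ℝ} (hy : 0 ≤ y) :
    Real.exp (-l * y) * truncatedExp l δ x ≤ truncatedExp l δ (x + y) := by
  unfold truncatedExp
  rw [neg_mul, Real.exp_neg, ← mul_inv]
  refine inv_anti₀ (by positivity) ?_
  rw [mul_add l, Real.exp_add, mul_add, mul_comm (Real.exp (l * y))]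
  gcongr
  exact le_mul_of_one_le_left hδ.le (Real.one_le_exp (by positivity))

lemma abs_truncatedExp_add_sub_le (hl : 0 ≤ l) (hδ : 0 < δ) (x : ℝ) {y : ℝ} (hy : 0 < y) :
    |truncatedExp l δ (x + y) - truncatedExp l δ x| ≤ δ⁻¹ * max l 1 * min y 1 := by
  have hpos := (truncatedExp_pos (l := l) hδ x).le
  calc |truncatedExp l δ (x + y) - truncatedExp l δ x|
      = truncatedExp l δ x - truncatedExp l δ (x + y) := by
        rw [abs_of_nonpos (sub_nonpos.2 (truncatedExp_antitone hl hδ (by linarith))), neg_sub]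
    _ ≤ truncatedExp l δ x * |Real.exp (-l * y) - 1| := by
        nlinarith [exp_neg_mul_mul_truncatedExp_le hl hδ x hy.le,
          neg_le_abs (Real.exp (-l * y) - 1)]
    _ ≤ δ⁻¹ * (max l 1 * min y 1) :=
        mul_le_mul ((le_abs_self _).trans (abs_truncatedExp_le_inv hδ x))
          (abs_exp_neg_mul_sub_one_le hl hy.le) (abs_nonneg _) (inv_pos.2 hδ).le
    _ = δ⁻¹ * max l 1 * min y 1 := (mul_assoc _ _ _).symm

lemma truncatedExp_le_add {a : ℝ} (hl : 0 ≤ l) (hδ : 0 < δ) (ha : 0 < a) (x : ℝ) :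
    truncatedExp l δ x ≤ Real.exp (l * a) + a⁻¹ * (|x| - x * truncatedExp l δ x) := by
  have hpos := truncatedExp_pos (l := l) hδ x
  rcases lt_or_ge x (-a) with hx | hx
  · have hfar : truncatedExp l δ x ≤ a⁻¹ * (|x| - x * truncatedExp l δ x) := by
      rw [le_inv_mul_iff₀ ha]
      nlinarith [abs_nonneg x]
    exact hfar.trans (le_add_of_nonneg_left (Real.exp_pos _).le)
  · have hnear : truncatedExp l δ x ≤ Real.exp (l * a) :=
      (truncatedExp_le_exp hδ x).trans (Real.exp_le_exp.2 (by nlinarith))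
    refine hnear.trans (le_add_of_nonneg_right (mul_nonneg (inv_pos.2 ha).le (sub_nonneg.2 ?_)))
    rcases le_total x 0 with hx0 | hx0
    · exact (mul_nonpos_of_nonpos_of_nonneg hx0 hpos.le).trans (abs_nonneg x)
    · have hone : truncatedExp l δ x ≤ 1 :=
        (truncatedExp_le_exp hδ x).trans (Real.exp_le_one_iff.2 (by nlinarith))
      exact (mul_le_of_le_one_right hx0 hone).trans (le_abs_self x)

end TruncatedExponential

lemma integrable_truncatedExp {μ : Measure ℝ} [IsFiniteMeasure μ] {l δ : ℝ} (hδ : 0 < δ) :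
    Integrable (truncatedExp l δ) μ :=
  .of_bound (contDiff_truncatedExp hδ).continuous.aestronglyMeasurable δ⁻¹
    (ae_of_all _ fun x => abs_truncatedExp_le_inv hδ x)

lemma integral_truncatedExp_le_add {μ : Measure ℝ} [IsProbabilityMeasure μ] (hμ : Integrable id μ)
    {l δ a : ℝ} (hl : 0 ≤ l) (hδ : 0 < δ) (ha : 0 < a) :
    ∫ x, truncatedExp l δ x ∂μ
      ≤ Real.exp (l * a) + a⁻¹ * (∫ x, |x| ∂μ - ∫ x, x * truncatedExp l δ x ∂μ) := by
  have habs : Integrable (fun x => |x|) μ := hμ.abs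
  have hmul : Integrable (fun x => x * truncatedExp l δ x) μ :=
    hμ.mul_bdd (contDiff_truncatedExp hδ).continuous.aestronglyMeasurable
      (ae_of_all _ fun x => abs_truncatedExp_le_inv hδ x)
  have hdiff : Integrable (fun x => a⁻¹ * (|x| - x * truncatedExp l δ x)) μ :=
    (habs.sub hmul).const_mul a⁻¹
  calc ∫ x, truncatedExp l δ x ∂μ
      ≤ ∫ x, (Real.exp (l * a) + a⁻¹ * (|x| - x * truncatedExp l δ x)) ∂μ :=
        integral_mono (integrable_truncatedExp hδ) ((integrable_const _).add hdiff)
          (truncatedExp_le_add hl hδ ha)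
    _ = Real.exp (l * a) + a⁻¹ * (∫ x, |x| ∂μ - ∫ x, x * truncatedExp l δ x ∂μ) := by
        rw [integral_add (integrable_const _) hdiff, integral_const_mul, integral_sub habs hmul]
        simp

lemma integrable_exp_neg_mul_of_integral_truncatedExp_le {μ : Measure ℝ} [IsFiniteMeasure μ]
    {l R : ℝ} (hR : ∀ δ, 0 < δ → ∫ x, truncatedExp l δ x ∂μ ≤ R) :
    Integrable (fun x => Real.exp (-(l * x))) μ := by
  have hδ : ∀ n : ℕ, (0 : ℝ) < 1 / (n + 1) := fun n => Nat.one_div_pos_of_nat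
  have hlim : ∀ x, Tendsto (fun n : ℕ => truncatedExp l (1 / (n + 1)) x) atTop
      (𝓝 (Real.exp (-(l * x)))) := fun x => by
    rw [Real.exp_neg]
    simpa [truncatedExp] using
      (tendsto_one_div_add_atTop_nhds_zero_nat.const_add (Real.exp (l * x))).inv₀ (by simp)
  have hbound : ∀ n : ℕ,
      ∫⁻ x, ‖truncatedExp l (1 / (n + 1)) x‖ₑ ∂μ ≤ ENNReal.ofReal R := fun n => by
    rw [← ofReal_integral_norm_eq_lintegral_enorm (integrable_truncatedExp (hδ n))]
    simp only [Real.norm_of_nonneg (truncatedExp_pos (hδ n) _).le]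
    exact ENNReal.ofReal_le_ofReal (hR _ (hδ n))
  exact integrable_of_tendsto (ae_of_all _ hlim)
    (fun n => (contDiff_truncatedExp (hδ n)).continuous.aestronglyMeasurable)
    (ne_top_of_le_ne_top ENNReal.ofReal_ne_top (liminf_le_of_frequently_le' (.of_forall hbound)))

namespace IsPositiveStable

variable {Y C : ℝ} {μ : Measure ℝ} [IsProbabilityMeasure μ]

lemma mul_integral_truncatedExp_le (hμ : IsPositiveStable Y C μ) (hY : Y ∈ Ioo 1 2) (hC : 0 ≤ C)
    {l δ : ℝ} (hl : 0 < l) (hδ : 0 < δ) :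
    C * Real.Gamma (1 - Y) * l ^ (Y - 1) * ∫ x, truncatedExp l δ x ∂μ
      ≤ ∫ x, x * truncatedExp l δ x ∂μ := by
  have hcont := (contDiff_truncatedExp (l := l) hδ).continuous
  have hinc := abs_truncatedExp_add_sub_le hl.le hδ
  rw [hμ.integral_mul_eq hY (contDiff_truncatedExp hδ) (abs_truncatedExp_le_inv hδ)
      (fun x y => hinc x),
    mul_assoc, mul_assoc, ← mul_assoc (Real.Gamma _), mul_comm (_ * _), ← integral_mul_const]
  gcongr
  · exact (integrable_truncatedExp hδ).mul_const _
  · exact integrable_marchaud hY hcont.stronglyMeasurable fun x y => hinc x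
  · exact fun x => mul_Gamma_mul_rpow_le_marchaud hY hl hcont.measurable
      (truncatedExp_pos hδ x).le
      (fun y hy => truncatedExp_antitone hl.le hδ (by linarith))
      (fun y hy => exp_neg_mul_mul_truncatedExp_le hl.le hδ x hy.le)

lemma integrable_exp_neg_mul (hμ : IsPositiveStable Y C μ) (hY : Y ∈ Ioo 1 2) (hC : 0 ≤ C)
    {l : ℝ} (hl : 0 ≤ l) : Integrable (fun x => Real.exp (-(l * x))) μ := by
  rcases hl.eq_or_lt with rfl | hl
  · simp
  set K := |C * Real.Gamma (1 - Y) * l ^ (Y - 1)|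
  set a := 2 * K + 1
  have ha : 0 < a := by positivity
  refine integrable_exp_neg_mul_of_integral_truncatedExp_le
    (R := 2 * (Real.exp (l * a) + a⁻¹ * ∫ x, |x| ∂μ)) fun δ hδ => ?_
  set J := ∫ x, truncatedExp l δ x ∂μ
  have hJ : 0 ≤ J := integral_nonneg fun x => (truncatedExp_pos hδ x).le
  have hsplit : J ≤ Real.exp (l * a) + a⁻¹ * (∫ x, |x| ∂μ - ∫ x, x * truncatedExp l δ x ∂μ) :=
    integral_truncatedExp_le_add (hμ.integrable_id hY.1) hl.le hδ ha
  have hstein : -∫ x, x * truncatedExp l δ x ∂μ ≤ K * J := by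
    have hgamma := mul_le_mul_of_nonneg_right (neg_abs_le (C * Real.Gamma (1 - Y) * l ^ (Y - 1))) hJ
    linarith [hμ.mul_integral_truncatedExp_le hY hC hl hδ]
  have hhalf : a⁻¹ * (K * J) ≤ J / 2 := by
    rw [inv_mul_le_iff₀ ha]
    nlinarith
  nlinarith [mul_le_mul_of_nonneg_left hstein (inv_pos.2 ha).le]

end IsPositiveStable

/-! ### The tail of the stable law -/

lemma abs_rpow_neg_sub_rpow_neg_le {Y c x y : ℝ} (hY : 0 ≤ Y) (hc : 0 < c) (hx : c ≤ x)
    (hy : c ≤ y) : |x ^ (-Y) - y ^ (-Y)| ≤ Y * c ^ (-Y - 1) * |x - y| := by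
  refine Convex.norm_image_sub_le_of_norm_hasDerivWithin_le (s := Ici c)
    (f := fun z : ℝ => z ^ (-Y)) (f' := fun z => -Y * z ^ (-Y - 1))
    (fun z (hz : c ≤ z) =>
      (Real.hasDerivAt_rpow_const (Or.inl (hc.trans_le hz).ne')).hasDerivWithinAt)
    (fun z (hz : c ≤ z) => ?_) (convex_Ici c) hy hx
  rw [norm_mul, norm_neg, Real.norm_of_nonneg hY,
    Real.norm_of_nonneg (Real.rpow_nonneg (hc.le.trans hz) _)]
  exact mul_le_mul_of_nonneg_left (Real.rpow_le_rpow_of_nonpos hc hz (by linarith)) hY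

lemma isBigO_sub_of_le_of_le {α : Type*} {l : Filter α} {f f₁ f₂ g h : α → ℝ}
    (h₁ : (fun x => f₁ x - g x) =O[l] h) (h₂ : (fun x => f₂ x - g x) =O[l] h)
    (hf₁ : ∀ᶠ x in l, f₁ x ≤ f x) (hf₂ : ∀ᶠ x in l, f x ≤ f₂ x) :
    (fun x => f x - g x) =O[l] h := by
  refine IsBigO.trans (IsBigO.of_bound' ?_) (h₁.norm_left.add h₂.norm_left)
  filter_upwards [hf₁, hf₂] with x hx₁ hx₂
  refine le_trans ?_ (le_abs_self _)
  rw [Real.norm_eq_abs, Real.norm_eq_abs, Real.norm_eq_abs, abs_le]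
  constructor
  · linarith [neg_abs_le (f₁ x - g x), abs_nonneg (f₂ x - g x)]
  · linarith [le_abs_self (f₂ x - g x), abs_nonneg (f₁ x - g x)]

lemma isBigO_rpow_neg_comp_sub_const {Y k : ℝ} (hY : 0 ≤ Y) {T : ℝ → ℝ}
    (hT : (fun x => T x - k * x ^ (-Y)) =O[atTop] fun x => x ^ (-Y - 1)) (a : ℝ) :
    (fun x => T (x - a) - k * x ^ (-Y)) =O[atTop] fun x => x ^ (-Y - 1) := by
  have hhalf : ∀ᶠ x : ℝ in atTop, 0 < x ∧ x / 2 ≤ x - a := by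
    filter_upwards [eventually_ge_atTop (2 * a), eventually_gt_atTop 0] with x hxa hx
    exact ⟨hx, by linarith⟩
  have hpow : (fun x => (x - a) ^ (-Y - 1)) =O[atTop] fun x => x ^ (-Y - 1) := by
    refine IsBigO.of_bound (2⁻¹ ^ (-Y - 1)) ?_
    filter_upwards [hhalf] with x ⟨hx, hxa⟩
    rw [Real.norm_of_nonneg (Real.rpow_nonneg (by linarith) _),
      Real.norm_of_nonneg (Real.rpow_nonneg hx.le _), ← Real.mul_rpow (by norm_num) hx.le]
    exact Real.rpow_le_rpow_of_nonpos (by positivity) (by linarith) (by linarith)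
  have hshift : (fun x => (x - a) ^ (-Y) - x ^ (-Y)) =O[atTop] fun x => x ^ (-Y - 1) := by
    refine IsBigO.of_bound (Y * |a| * 2⁻¹ ^ (-Y - 1)) ?_
    filter_upwards [hhalf] with x ⟨hx, hxa⟩
    rw [Real.norm_of_nonneg (Real.rpow_nonneg hx.le _)]
    calc |(x - a) ^ (-Y) - x ^ (-Y)| ≤ Y * (x / 2) ^ (-Y - 1) * |x - a - x| :=
          abs_rpow_neg_sub_rpow_neg_le hY (by positivity) hxa (by linarith)
      _ = Y * |a| * 2⁻¹ ^ (-Y - 1) * x ^ (-Y - 1) := by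
          rw [sub_sub_cancel_left, abs_neg, div_eq_inv_mul, Real.mul_rpow (by norm_num) hx.le]
          ring
  have hTshift : (fun x => T (x - a) - k * (x - a) ^ (-Y)) =O[atTop] fun x => x ^ (-Y - 1) :=
    (hT.comp_tendsto (tendsto_atTop_add_const_right atTop (-a) tendsto_id)).trans hpow
  exact (hTshift.add (hshift.const_mul_left k)).congr_left fun x => by ring

lemma exists_abs_smoothTransition_add_sub_le :
    ∃ L : ℝ, ∀ u y : ℝ, 0 < y →
      |Real.smoothTransition (u + y) - Real.smoothTransition u| ≤ L * min y 1 := by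
  obtain ⟨K, hK⟩ := (Real.smoothTransition.contDiff (n := 1)).contDiffOn.exists_lipschitzOnWith
    one_ne_zero (convex_Icc 0 1) isCompact_Icc
  refine ⟨max K 1, fun u y hy => le_max_mul_min_one hy.le ?_ ?_⟩
  · have hlip := (hK.to_restrict.comp (LipschitzWith.projIcc zero_le_one)).dist_le_mul (u + y) u
    simpa [Real.dist_eq, abs_of_pos hy] using hlip
  · exact abs_sub_le_of_le_of_le (Real.smoothTransition.nonneg _) (Real.smoothTransition.le_one _)
      (Real.smoothTransition.nonneg _) (Real.smoothTransition.le_one _) |>.trans_eq (sub_zero 1)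

lemma marchaud_eq_integral_Ioi {E : Type*} [NormedAddCommGroup E] [NormedSpace ℝ E] (Y : ℝ)
    {f : ℝ → E} {x u : ℝ} (hf : ∀ z ≤ x, f z = 0) (hu : u ≤ x) :
    marchaud Y f u = ∫ z in Ioi x, (z - u) ^ (-Y) • f z := by
  have hshift := (measurePreserving_add_left volume u).setIntegral_preimage_emb
    (measurableEmbedding_addLeft u) (fun z => (z - u) ^ (-Y) • f z) (Ioi u)
  rw [preimage_const_add_Ioi, sub_self] at hshift
  simp only [marchaud, hf u hu, sub_zero]
  calc ∫ y in Ioi (0 : ℝ), y ^ (-Y) • f (u + y)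
      = ∫ z in Ioi u, (z - u) ^ (-Y) • f z := by simpa only [add_sub_cancel_left] using hshift
    _ = ∫ z in Ioi x, (z - u) ^ (-Y) • f z :=
        (setIntegral_eq_of_subset_of_forall_sdiff_eq_zero measurableSet_Ioi (Ioi_subset_Ioi hu)
          fun z hz => by rw [hf z (not_lt.1 hz.2), smul_zero])

section SmoothTail

/-- A smooth bounded function such that `u * smoothTail x u` lies between the indicators of
`[x + 1, ∞)` and `[x, ∞)`: the test function which turns Stein's identity into an estimate of the
tail. -/
noncomputable def smoothTail (x u : ℝ) : ℝ := Real.smoothTransition (u - x) / u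

variable {x : ℝ}

lemma smoothTail_of_le {u : ℝ} (hu : u ≤ x) : smoothTail x u = 0 := by
  rw [smoothTail, Real.smoothTransition.zero_of_nonpos (sub_nonpos.2 hu), zero_div]

lemma mul_smoothTail (hx : 0 < x) (u : ℝ) : u * smoothTail x u = Real.smoothTransition (u - x) := by
  rcases eq_or_ne u 0 with rfl | hu
  · rw [zero_mul, Real.smoothTransition.zero_of_nonpos (by linarith)]
  · rw [smoothTail, mul_div_cancel₀ _ hu]

lemma smoothTail_eq_inv_max_mul (x u : ℝ) :
    smoothTail x u = (max u x)⁻¹ * Real.smoothTransition (u - x) := by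
  rcases le_total u x with hu | hu
  · rw [smoothTail_of_le hu, Real.smoothTransition.zero_of_nonpos (sub_nonpos.2 hu), mul_zero]
  · rw [max_eq_left hu, smoothTail, div_eq_inv_mul]

lemma abs_inv_max_le (hx : 0 < x) (u : ℝ) : |(max u x)⁻¹| ≤ x⁻¹ := by
  rw [abs_of_pos (by positivity)]
  exact inv_anti₀ hx (le_max_right u x)

lemma abs_smoothTail_le (hx : 0 < x) (u : ℝ) : |smoothTail x u| ≤ x⁻¹ := by
  rw [smoothTail_eq_inv_max_mul, abs_mul, abs_of_nonneg (Real.smoothTransition.nonneg (u - x))]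
  exact (mul_le_of_le_one_right (abs_nonneg _) (Real.smoothTransition.le_one _)).trans
    (abs_inv_max_le hx u)

lemma abs_inv_max_add_sub_le (hx : 1 ≤ x) (u : ℝ) {y : ℝ} (hy : 0 < y) :
    |(max (u + y) x)⁻¹ - (max u x)⁻¹| ≤ x⁻¹ * min y 1 := by
  have hx0 : 0 < x := by linarith
  have hpos : ∀ v, 0 < max v x := fun v => lt_max_of_lt_right hx0
  have hmono : max u x ≤ max (u + y) x := max_le_max_right x (by linarith)
  have hincr : max (u + y) x ≤ max u x + y :=
    max_le (by linarith [le_max_left u x]) (by linarith [le_max_right u x])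
  rw [abs_sub_comm, abs_of_nonneg (sub_nonneg.2 (inv_anti₀ (hpos u) hmono))]
  refine (le_max_mul_min_one hy.le (A := x⁻¹) (B := x⁻¹) ?_ ?_).trans_eq (by rw [max_self])
  · calc (max u x)⁻¹ - (max (u + y) x)⁻¹
        = (max u x)⁻¹ * ((max (u + y) x)⁻¹ * (max (u + y) x - max u x)) := by
          have := (hpos u).ne'
          have := (hpos (u + y)).ne'
          field_simp
      _ ≤ x⁻¹ * (1 * y) := by
          have := hpos u
          have := hpos (u + y)
          gcongr
          · exact le_max_right u x
          · exact inv_le_one_of_one_le₀ (hx.trans (le_max_right _ x))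
          · linarith
      _ = x⁻¹ * y := by rw [one_mul]
  · linarith [inv_pos.2 (hpos (u + y)), inv_anti₀ hx0 (le_max_right u x)]

lemma exists_abs_smoothTail_add_sub_le :
    ∃ c, ∀ x u y : ℝ, 1 ≤ x → 0 < y →
      |smoothTail x (u + y) - smoothTail x u| ≤ c * x⁻¹ * min y 1 := by
  obtain ⟨L, hL⟩ := exists_abs_smoothTransition_add_sub_le
  refine ⟨1 + L, fun x u y hx hy => ?_⟩
  have hst : |Real.smoothTransition (u + y - x)| ≤ 1 := by
    rw [abs_of_nonneg (Real.smoothTransition.nonneg _)]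
    exact Real.smoothTransition.le_one _
  rw [smoothTail_eq_inv_max_mul, smoothTail_eq_inv_max_mul]
  refine (abs_mul_sub_mul_le (abs_inv_max_le (by linarith) u) (abs_inv_max_add_sub_le hx u hy) hst
    ?_).trans_eq (by ring : (x⁻¹ + x⁻¹ * L) * min y 1 = (1 + L) * x⁻¹ * min y 1)
  rw [add_sub_right_comm]
  exact hL (u - x) y hy

open scoped ContDiff in
lemma contDiff_smoothTail (hx : 0 < x) : ContDiff ℝ ∞ (smoothTail x) := by
  refine contDiff_iff_contDiffAt.2 fun u => ?_
  rcases lt_or_ge u x with hu | hu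
  · refine (contDiffAt_const (c := (0 : ℝ))).congr_of_eventuallyEq ?_
    filter_upwards [Iio_mem_nhds hu] with v (hv : v < x) using smoothTail_of_le hv.le
  · exact (Real.smoothTransition.contDiff.comp
      (contDiff_id.sub contDiff_const)).contDiffAt.div contDiffAt_id (hx.trans_le hu).ne'

end SmoothTail

section MarchaudSmoothTail

variable {Y x : ℝ}

lemma integrableOn_Ioi_rpow_neg_sub_one (hY : 0 < Y) (hx : 0 < x) :
    IntegrableOn (fun z : ℝ => z ^ (-Y - 1)) (Ioi x) :=
  integrableOn_Ioi_rpow_of_lt (by linarith) hx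

lemma integral_Ioi_rpow_neg_sub_one (hY : 0 < Y) (hx : 0 < x) :
    ∫ z in Ioi x, z ^ (-Y - 1) = x ^ (-Y) / Y := by
  rw [integral_Ioi_rpow_of_lt (by linarith) hx, sub_add_cancel, neg_div_neg_eq]

lemma abs_rpow_smul_smoothTail_le {u z : ℝ} (hY : 0 ≤ Y) (hx : 0 < x) (hz : x < z)
    (hu : |u| ≤ x / 2) :
    |(z - u) ^ (-Y) • smoothTail x z| ≤ 2⁻¹ ^ (-Y) * z ^ (-Y - 1) := by
  have hz0 : 0 < z := hx.trans hz
  have hzu : 2⁻¹ * z ≤ z - u := by linarith [le_abs_self u]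
  have hinv : |smoothTail x z| ≤ z⁻¹ := by
    rw [smoothTail_eq_inv_max_mul, max_eq_left hz.le, abs_mul, abs_of_pos (inv_pos.2 hz0),
      abs_of_nonneg (Real.smoothTransition.nonneg _)]
    exact mul_le_of_le_one_right (by positivity) (Real.smoothTransition.le_one _)
  rw [smul_eq_mul, abs_mul, abs_of_nonneg (Real.rpow_nonneg (by linarith) _)]
  calc (z - u) ^ (-Y) * |smoothTail x z| ≤ (2⁻¹ * z) ^ (-Y) * z⁻¹ := by
        refine mul_le_mul ?_ hinv (abs_nonneg _) (by positivity)
        exact Real.rpow_le_rpow_of_nonpos (by positivity) hzu (by linarith)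
    _ = 2⁻¹ ^ (-Y) * z ^ (-Y - 1) := by
        rw [Real.mul_rpow (by norm_num) hz0.le, Real.rpow_sub_one hz0.ne', div_eq_mul_inv,
          mul_assoc]

lemma integrableOn_rpow_smul_smoothTail {u : ℝ} (hY : 0 < Y) (hx : 0 < x) (hu : |u| ≤ x / 2) :
    IntegrableOn (fun z => (z - u) ^ (-Y) • smoothTail x z) (Ioi x) := by
  have hmeas : Measurable (smoothTail x) := (contDiff_smoothTail hx).continuous.measurable
  refine ((integrableOn_Ioi_rpow_neg_sub_one hY hx).const_mul (2⁻¹ ^ (-Y))).mono'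
    (Measurable.aestronglyMeasurable (by fun_prop)) ?_
  filter_upwards [ae_restrict_mem measurableSet_Ioi] with z hz
  exact abs_rpow_smul_smoothTail_le hY.le hx hz hu

lemma rpow_smul_smoothTail {z : ℝ} (hz : 0 < z) :
    (z - 0) ^ (-Y) • smoothTail x z = Real.smoothTransition (z - x) * z ^ (-Y - 1) := by
  rw [sub_zero, smul_eq_mul, smoothTail, Real.rpow_sub_one hz.ne']
  ring

lemma marchaud_smoothTail_zero_eq (hx : 0 < x) :
    marchaud Y (smoothTail x) 0 = ∫ z in Ioi x, (z - 0) ^ (-Y) • smoothTail x z :=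
  marchaud_eq_integral_Ioi Y (fun _ hz => smoothTail_of_le hz) hx.le

lemma integrableOn_rpow_smul_smoothTail_zero (hY : 0 < Y) (hx : 0 < x) :
    IntegrableOn (fun z => (z - 0) ^ (-Y) • smoothTail x z) (Ioi x) :=
  integrableOn_rpow_smul_smoothTail hY hx (by rw [abs_zero]; positivity)

lemma marchaud_smoothTail_zero_le (hY : 0 < Y) (hx : 0 < x) :
    marchaud Y (smoothTail x) 0 ≤ x ^ (-Y) / Y := by
  rw [marchaud_smoothTail_zero_eq hx, ← integral_Ioi_rpow_neg_sub_one hY hx]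
  refine setIntegral_mono_on (integrableOn_rpow_smul_smoothTail_zero hY hx)
    (integrableOn_Ioi_rpow_neg_sub_one hY hx) measurableSet_Ioi fun z (hz : x < z) => ?_
  have hz0 := hx.trans hz
  rw [rpow_smul_smoothTail hz0]
  exact mul_le_of_le_one_left (by positivity) (Real.smoothTransition.le_one _)

lemma le_marchaud_smoothTail_zero (hY : 0 < Y) (hx : 0 < x) :
    (x + 1) ^ (-Y) / Y ≤ marchaud Y (smoothTail x) 0 := by
  have hx1 : 0 < x + 1 := by linarith
  rw [marchaud_smoothTail_zero_eq hx, ← integral_Ioi_rpow_neg_sub_one hY hx1]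
  calc ∫ z in Ioi (x + 1), z ^ (-Y - 1)
      = ∫ z in Ioi (x + 1), (z - 0) ^ (-Y) • smoothTail x z := by
        refine setIntegral_congr_fun measurableSet_Ioi fun z (hz : x + 1 < z) => ?_
        rw [rpow_smul_smoothTail (hx1.trans hz),
          Real.smoothTransition.one_of_one_le (by linarith), one_mul]
    _ ≤ ∫ z in Ioi x, (z - 0) ^ (-Y) • smoothTail x z := by
        refine setIntegral_mono_set (integrableOn_rpow_smul_smoothTail_zero hY hx) ?_
          (Ioi_subset_Ioi (by linarith)).eventuallyLE
        filter_upwards [ae_restrict_mem measurableSet_Ioi] with z (hz : x < z)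
        have hz0 := hx.trans hz
        rw [rpow_smul_smoothTail hz0]
        exact mul_nonneg (Real.smoothTransition.nonneg _) (by positivity)

lemma abs_marchaud_smoothTail_zero_sub_le (hY : 0 < Y) (hx : 0 < x) :
    |marchaud Y (smoothTail x) 0 - x ^ (-Y) / Y| ≤ x ^ (-Y - 1) := by
  rw [abs_sub_comm, abs_of_nonneg (sub_nonneg.2 (marchaud_smoothTail_zero_le hY hx))]
  calc x ^ (-Y) / Y - marchaud Y (smoothTail x) 0
      ≤ x ^ (-Y) / Y - (x + 1) ^ (-Y) / Y :=
        sub_le_sub_left (le_marchaud_smoothTail_zero hY hx) _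
    _ ≤ |x ^ (-Y) - (x + 1) ^ (-Y)| / Y := by
        rw [← sub_div]
        gcongr
        exact le_abs_self _
    _ ≤ Y * x ^ (-Y - 1) * |x - (x + 1)| / Y := by
        gcongr
        exact abs_rpow_neg_sub_rpow_neg_le hY.le hx le_rfl (by linarith)
    _ = x ^ (-Y - 1) := by
        rw [sub_add_cancel_left, abs_neg, abs_one, mul_one, mul_div_cancel_left₀ _ hY.ne']

lemma abs_marchaud_smoothTail_sub_le {u : ℝ} (hY : 0 < Y) (hx : 0 < x) (hu : |u| ≤ x / 2) :
    |marchaud Y (smoothTail x) u - marchaud Y (smoothTail x) 0|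
      ≤ 2⁻¹ ^ (-Y - 1) * |u| * x ^ (-Y - 1) := by
  have hux : u ≤ x := by linarith [le_abs_self u]
  rw [marchaud_eq_integral_Ioi Y (fun _ hz => smoothTail_of_le hz) hux,
    marchaud_smoothTail_zero_eq hx,
    ← integral_sub (integrableOn_rpow_smul_smoothTail hY hx hu)
      (integrableOn_rpow_smul_smoothTail_zero hY hx)]
  have hbound : ∀ z ∈ Ioi x, ‖(z - u) ^ (-Y) • smoothTail x z - (z - 0) ^ (-Y) • smoothTail x z‖
      ≤ Y * 2⁻¹ ^ (-Y - 1) * |u| * x⁻¹ * z ^ (-Y - 1) := by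
    intro z (hz : x < z)
    have hz0 : 0 < z := hx.trans hz
    rw [← sub_smul, norm_smul, sub_zero, Real.norm_eq_abs, Real.norm_eq_abs]
    calc |(z - u) ^ (-Y) - z ^ (-Y)| * |smoothTail x z|
        ≤ (Y * (2⁻¹ * z) ^ (-Y - 1) * |z - u - z|) * x⁻¹ := by
          gcongr
          · exact abs_rpow_neg_sub_rpow_neg_le hY.le (by positivity)
              (by linarith [le_abs_self u]) (by linarith)
          · exact abs_smoothTail_le hx z
      _ = Y * 2⁻¹ ^ (-Y - 1) * |u| * x⁻¹ * z ^ (-Y - 1) := by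
          rw [sub_sub_cancel_left, abs_neg, Real.mul_rpow (by norm_num) hz0.le]
          ring
  calc _ ≤ ∫ z in Ioi x, Y * 2⁻¹ ^ (-Y - 1) * |u| * x⁻¹ * z ^ (-Y - 1) :=
        norm_integral_le_of_norm_le ((integrableOn_Ioi_rpow_neg_sub_one hY hx).const_mul _)
          ((ae_restrict_mem measurableSet_Ioi).mono hbound)
    _ = 2⁻¹ ^ (-Y - 1) * |u| * x ^ (-Y - 1) := by
        rw [integral_const_mul, integral_Ioi_rpow_neg_sub_one hY hx, Real.rpow_sub_one hx.ne']
        field_simp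

lemma exists_abs_marchaud_smoothTail_sub_le (hY : Y ∈ Ioo 1 2) :
    ∃ K, 0 ≤ K ∧ ∀ x, 1 ≤ x → ∀ u, |marchaud Y (smoothTail x) u - marchaud Y (smoothTail x) 0|
      ≤ 2⁻¹ ^ (-Y - 1) * x ^ (-Y - 1) * |u|
        + {u | x / 2 < |u|}.indicator (fun _ => K * x⁻¹) u := by
  obtain ⟨c, hc⟩ := exists_abs_smoothTail_add_sub_le
  set I := ∫ y in Ioi (0 : ℝ), y ^ (-Y) * min y 1
  refine ⟨2 * |c * I|, by positivity, fun x hx u => ?_⟩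
  have hx0 : 0 < x := by linarith
  by_cases hu : u ∈ {u : ℝ | x / 2 < |u|}
  · have hfar : ∀ v, |marchaud Y (smoothTail x) v| ≤ |c * I| * x⁻¹ := fun v =>
      calc |marchaud Y (smoothTail x) v| ≤ c * x⁻¹ * I :=
            norm_marchaud_le (f := smoothTail x) hY fun y hy => hc x v y hx hy
        _ = c * I * x⁻¹ := by ring
        _ ≤ |c * I| * x⁻¹ := by
            gcongr
            exact le_abs_self _
    have htri := abs_sub (marchaud Y (smoothTail x) u) (marchaud Y (smoothTail x) 0)
    have hnonneg : 0 ≤ 2⁻¹ ^ (-Y - 1) * x ^ (-Y - 1) * |u| := by positivity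
    rw [indicator_of_mem hu]
    linarith [hfar u, hfar 0]
  · rw [indicator_of_notMem hu, add_zero, mul_right_comm]
    exact abs_marchaud_smoothTail_sub_le (by linarith [hY.1]) hx0 (not_lt.1 hu)

end MarchaudSmoothTail

namespace IsPositiveStable

variable {Y C : ℝ} {μ : Measure ℝ} [IsProbabilityMeasure μ]

lemma integral_abs_marchaud_smoothTail_sub_isBigO (hμ : IsPositiveStable Y C μ)
    (hY : Y ∈ Ioo 1 2) :
    (fun x => ∫ u, |marchaud Y (smoothTail x) u - marchaud Y (smoothTail x) 0| ∂μ)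
      =O[atTop] fun x => x ^ (-Y - 1) := by
  have hY0 : 0 < Y := by linarith [hY.1]
  obtain ⟨K, hK, hle⟩ := exists_abs_marchaud_smoothTail_sub_le hY
  set D := 2 * |C * Real.Gamma (-Y)| * 2 ^ Y
  refine IsBigO.of_bound (2⁻¹ ^ (-Y - 1) * ∫ u, |u| ∂μ + D * 2⁻¹ ^ (-Y) * K) ?_
  filter_upwards [eventually_ge_atTop 1] with x hx
  have hx0 : 0 < x := by linarith
  have hset : MeasurableSet {u : ℝ | x / 2 < |u|} := measurableSet_lt (by fun_prop) (by fun_prop)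
  have hlin : Integrable (fun u : ℝ => 2⁻¹ ^ (-Y - 1) * x ^ (-Y - 1) * |u|) μ :=
    (hμ.integrable_id hY.1).abs.const_mul _
  have hind := (integrable_const (μ := μ) (K * x⁻¹)).indicator hset
  rw [Real.norm_of_nonneg (integral_nonneg fun u => abs_nonneg _),
    Real.norm_of_nonneg (by positivity)]
  calc ∫ u, |marchaud Y (smoothTail x) u - marchaud Y (smoothTail x) 0| ∂μ
      ≤ ∫ u, 2⁻¹ ^ (-Y - 1) * x ^ (-Y - 1) * |u|
          + {u | x / 2 < |u|}.indicator (fun _ => K * x⁻¹) u ∂μ :=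
        integral_mono_of_nonneg (ae_of_all _ fun u => abs_nonneg _) (hlin.add hind)
          (ae_of_all _ (hle x hx))
    _ = 2⁻¹ ^ (-Y - 1) * x ^ (-Y - 1) * ∫ u, |u| ∂μ + μ.real {u | x / 2 < |u|} * (K * x⁻¹) := by
        rw [integral_add hlin hind, integral_const_mul, integral_indicator_const _ hset,
          smul_eq_mul]
    _ ≤ 2⁻¹ ^ (-Y - 1) * x ^ (-Y - 1) * ∫ u, |u| ∂μ + D * (2⁻¹ * x) ^ (-Y) * (K * x⁻¹) := by
        gcongr
        rw [inv_mul_eq_div]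
        exact hμ.measureReal_lt_abs_le hY0.le (by positivity)
    _ = _ := by
        rw [Real.mul_rpow (by norm_num) hx0.le, Real.rpow_sub_one hx0.ne']
        ring

lemma integral_smoothTransition_eq (hμ : IsPositiveStable Y C μ) (hY : Y ∈ Ioo 1 2) {x : ℝ}
    (hx : 1 ≤ x) :
    ∫ u, Real.smoothTransition (u - x) ∂μ = C * ∫ u, marchaud Y (smoothTail x) u ∂μ := by
  have hx0 : 0 < x := by linarith
  obtain ⟨c, hc⟩ := exists_abs_smoothTail_add_sub_le
  rw [← hμ.integral_mul_eq hY (contDiff_smoothTail hx0) (abs_smoothTail_le hx0)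
    fun u y hy => hc x u y hx hy]
  simp only [mul_smoothTail hx0]

lemma integral_smoothTransition_sub_isBigO (hμ : IsPositiveStable Y C μ) (hY : Y ∈ Ioo 1 2) :
    (fun x => ∫ u, Real.smoothTransition (u - x) ∂μ - C / Y * x ^ (-Y))
      =O[atTop] fun x => x ^ (-Y - 1) := by
  have hY0 : 0 < Y := by linarith [hY.1]
  have hmain : (fun x => marchaud Y (smoothTail x) 0 - x ^ (-Y) / Y)
      =O[atTop] fun x => x ^ (-Y - 1) := by
    refine IsBigO.of_bound' ?_
    filter_upwards [eventually_gt_atTop 0] with x hx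
    exact (abs_marchaud_smoothTail_zero_sub_le hY0 hx).trans (le_abs_self _)
  have herror : (fun x => ∫ u, (marchaud Y (smoothTail x) u - marchaud Y (smoothTail x) 0) ∂μ)
      =O[atTop] fun x => x ^ (-Y - 1) :=
    IsBigO.trans (IsBigO.of_norm_le fun x => norm_integral_le_integral_norm _)
      (hμ.integral_abs_marchaud_smoothTail_sub_isBigO hY)
  refine ((herror.add hmain).const_mul_left C).congr' ?_ EventuallyEq.rfl
  filter_upwards [eventually_ge_atTop 1] with x hx
  obtain ⟨c, hc⟩ := exists_abs_smoothTail_add_sub_le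
  have hint : Integrable (marchaud Y (smoothTail x)) μ :=
    integrable_marchaud hY (contDiff_smoothTail (by linarith)).continuous.stronglyMeasurable
      fun u y hy => hc x u y hx hy
  rw [hμ.integral_smoothTransition_eq hY hx, integral_sub hint (integrable_const _),
    integral_const, probReal_univ, one_smul]
  ring

theorem measureReal_Ici_sub_isBigO (hμ : IsPositiveStable Y C μ) (hY : Y ∈ Ioo 1 2) :
    (fun x => μ.real (Ici x) - C / Y * x ^ (-Y)) =O[atTop] fun x => x ^ (-Y - 1) := by
  have hst (x : ℝ) : Integrable (fun u => Real.smoothTransition (u - x)) μ := by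
    refine Integrable.of_bound (C := 1) ?_ (ae_of_all _ fun u => ?_)
    · exact (Real.smoothTransition.continuous.comp
        (continuous_id.sub continuous_const)).aestronglyMeasurable
    · rw [Real.norm_of_nonneg (Real.smoothTransition.nonneg _)]
      exact Real.smoothTransition.le_one _
  have hind (x : ℝ) : μ.real (Ici x) = ∫ u, (Ici x).indicator 1 u ∂μ :=
    (integral_indicator_one measurableSet_Ici).symm
  have hint (x : ℝ) : Integrable ((Ici x).indicator (1 : ℝ → ℝ)) μ :=
    (integrable_const 1).indicator measurableSet_Ici
  have hbase := hμ.integral_smoothTransition_sub_isBigO hY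
  refine isBigO_sub_of_le_of_le hbase (isBigO_rpow_neg_comp_sub_const (by linarith [hY.1]) hbase 1)
    (.of_forall fun x => ?_) (.of_forall fun x => ?_)
  · rw [hind]
    refine integral_mono (hst x) (hint x) fun u => ?_
    rcases lt_or_ge u x with hu | hu
    · exact (Real.smoothTransition.zero_of_nonpos (by linarith)).trans_le
        (indicator_nonneg (fun _ _ => zero_le_one) u)
    · rw [indicator_of_mem (mem_Ici.2 hu)]
      exact Real.smoothTransition.le_one _
  · rw [hind]
    refine integral_mono (hint x) (hst (x - 1)) fun u => ?_
    rcases lt_or_ge u x with hu | hu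
    · rw [indicator_of_notMem (notMem_Ici.2 hu)]
      exact Real.smoothTransition.nonneg _
    · rw [indicator_of_mem (mem_Ici.2 hu)]
      exact (Real.smoothTransition.one_of_one_le (by linarith)).ge

end IsPositiveStable

/-! ### One big jump -/

section OneBigJump

variable {Ω : Type*} [MeasurableSpace Ω] {P : Measure Ω} [IsProbabilityMeasure P]

lemma antitone_measureReal_le {A : Ω → ℝ} : Antitone fun x => P.real {ω | x ≤ A ω} :=
  fun _ _ hxy => measureReal_mono fun _ hω => hxy.trans hω

lemma measureReal_comp_le_eq_integral {A B : Ω → ℝ} (hA : Measurable A) (hB : Measurable B)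
    (hAB : IndepFun A B P) {h : ℝ → ℝ} (hh : Measurable h) :
    P.real {ω | h (B ω) ≤ A ω} = ∫ ω, P.real {ω' | h (B ω) ≤ A ω'} ∂P := by
  have hset : MeasurableSet {q : ℝ × ℝ | h q.2 ≤ q.1} :=
    measurableSet_le (hh.comp measurable_snd) measurable_fst
  have hslice : ∀ b, P.map A ((·, b) ⁻¹' {q : ℝ × ℝ | h q.2 ≤ q.1}) = P {ω' | h b ≤ A ω'} :=
    fun b => Measure.map_apply hA (measurable_prodMk_right hset)
  have hmeas : Measurable fun b => P {ω' | h b ≤ A ω'} := by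
    simp only [← hslice]
    have := Measure.isProbabilityMeasure_map (μ := P) hA.aemeasurable
    exact measurable_measure_prodMk_right hset
  have hjoint : P {ω | h (B ω) ≤ A ω} = ∫⁻ ω, P {ω' | h (B ω) ≤ A ω'} ∂P := by
    have := Measure.isProbabilityMeasure_map (μ := P) hA.aemeasurable
    have := Measure.isProbabilityMeasure_map (μ := P) hB.aemeasurable
    calc P {ω | h (B ω) ≤ A ω}
        = P.map (fun ω => (A ω, B ω)) {q : ℝ × ℝ | h q.2 ≤ q.1} :=
          (Measure.map_apply (hA.prodMk hB) hset).symm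
      _ = ∫⁻ ω, P {ω' | h (B ω) ≤ A ω'} ∂P := by
          rw [(indepFun_iff_map_prod_eq_prod_map_map hA.aemeasurable hB.aemeasurable).1 hAB,
            Measure.prod_apply_symm hset]
          simp only [hslice]
          exact lintegral_map hmeas hB
  rw [Measure.real, hjoint]
  exact (integral_toReal (f := fun ω => P {ω' | h (B ω) ≤ A ω'}) (hmeas.comp hB).aemeasurable
    (ae_of_all _ fun _ => measure_lt_top _ _)).symm

lemma abs_tail_comp_max_sub_le {T : ℝ → ℝ} {Y k K p w : ℝ} (hY : 0 ≤ Y) (hk : 0 ≤ k) (hK : 0 ≤ K)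
    (hp : 0 < p) (hp1 : p ≤ 1) (hw : 0 < w)
    (hT : ∀ y, p * w ≤ y → |T y - k * y ^ (-Y)| ≤ K * y ^ (-Y - 1)) (b : ℝ) :
    |T (max (p * w) (w - b)) - k * w ^ (-Y)| ≤ (k * Y * |b| + K) * (p * w) ^ (-Y - 1) := by
  have hpw : 0 < p * w := by positivity
  have hpww : p * w ≤ w := mul_le_of_le_one_left hw.le hp1
  set m := max (p * w) (w - b)
  have hm : p * w ≤ m := le_max_left _ _
  have hmw : |m - w| ≤ |b| := by
    simpa [m, max_comm, max_eq_left hpww] using abs_max_sub_max_le_abs (w - b) w (p * w)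
  have hmpow : m ^ (-Y - 1) ≤ (p * w) ^ (-Y - 1) :=
    Real.rpow_le_rpow_of_nonpos hpw hm (by linarith)
  calc |T m - k * w ^ (-Y)|
      = |(T m - k * m ^ (-Y)) + k * (m ^ (-Y) - w ^ (-Y))| := by ring_nf
    _ ≤ |T m - k * m ^ (-Y)| + k * |m ^ (-Y) - w ^ (-Y)| := by
        refine (abs_add_le _ _).trans_eq ?_
        rw [abs_mul k, abs_of_nonneg hk]
    _ ≤ K * (p * w) ^ (-Y - 1) + k * (Y * (p * w) ^ (-Y - 1) * |b|) := by
        gcongr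
        · exact (hT m hm).trans (by gcongr)
        · exact (abs_rpow_neg_sub_rpow_neg_le hY hpw hm hpww).trans (by gcongr)
    _ = (k * Y * |b| + K) * (p * w) ^ (-Y - 1) := by ring

lemma measureReal_le_and_le_add_sub_isBigO {A B : Ω → ℝ} (hA : Measurable A) (hB : Measurable B)
    (hAB : IndepFun A B P) (hBint : Integrable B P) {Y k p : ℝ} (hY : 0 ≤ Y) (hk : 0 ≤ k)
    (hp : 0 < p) (hp1 : p ≤ 1)
    (hT : (fun y => P.real {ω | y ≤ A ω} - k * y ^ (-Y)) =O[atTop] fun y => y ^ (-Y - 1)) :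
    (fun w => P.real {ω | p * w ≤ A ω ∧ w ≤ A ω + B ω} - k * w ^ (-Y))
      =O[atTop] fun w => w ^ (-Y - 1) := by
  set T : ℝ → ℝ := fun y => P.real {ω | y ≤ A ω}
  obtain ⟨K, hK, hbound⟩ := hT.exists_nonneg
  obtain ⟨r, hr⟩ := eventually_atTop.1 hbound.bound
  refine IsBigO.of_bound ((k * Y * ∫ ω, |B ω| ∂P + K) * p ^ (-Y - 1)) ?_
  filter_upwards [eventually_ge_atTop (r / p), eventually_gt_atTop 0] with w hwr hw
  have hpw : 0 < p * w := by positivity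
  have hTle : ∀ y, p * w ≤ y → |T y - k * y ^ (-Y)| ≤ K * y ^ (-Y - 1) := by
    intro y hy
    have hry : r ≤ y := ((div_le_iff₀' hp).1 hwr).trans hy
    simpa [Real.norm_of_nonneg (Real.rpow_nonneg (hpw.le.trans hy) _)] using hr y hry
  have hevent : {ω | p * w ≤ A ω ∧ w ≤ A ω + B ω} = {ω | max (p * w) (w - B ω) ≤ A ω} := by
    simp only [max_le_iff, sub_le_iff_le_add]
  have hmax : Measurable fun b => max (p * w) (w - b) := by fun_prop
  have hTint : Integrable (fun ω => T (max (p * w) (w - B ω))) P :=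
    Integrable.of_bound (C := 1)
      (antitone_measureReal_le.measurable.comp (hmax.comp hB)).aestronglyMeasurable
      (ae_of_all _ fun ω => by
        rw [Real.norm_of_nonneg measureReal_nonneg]
        exact measureReal_le_one)
  have hBabs := hBint.abs.const_mul (k * Y)
  rw [hevent, measureReal_comp_le_eq_integral hA hB hAB hmax,
    Real.norm_of_nonneg (Real.rpow_nonneg hw.le (-Y - 1))]
  calc ‖∫ ω, T (max (p * w) (w - B ω)) ∂P - k * w ^ (-Y)‖
      = ‖∫ ω, (T (max (p * w) (w - B ω)) - k * w ^ (-Y)) ∂P‖ := by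
        rw [integral_sub hTint (integrable_const _), integral_const, probReal_univ, one_smul]
    _ ≤ ∫ ω, (k * Y * |B ω| + K) * (p * w) ^ (-Y - 1) ∂P :=
        norm_integral_le_of_norm_le ((hBabs.add (integrable_const K)).mul_const _)
          (ae_of_all _ fun ω => abs_tail_comp_max_sub_le hY hk hK hp hp1 hw hTle (B ω))
    _ = (k * Y * ∫ ω, |B ω| ∂P + K) * p ^ (-Y - 1) * w ^ (-Y - 1) := by
        rw [integral_mul_const, integral_add hBabs (integrable_const K), integral_const_mul,
          integral_const, probReal_univ, one_smul, Real.mul_rpow hp.le hw.le]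
        ring

end OneBigJump

lemma isBigO_rpow_comp_const_mul {f : ℝ → ℝ} {c s : ℝ} (hc : 0 < c)
    (hf : f =O[atTop] fun x => x ^ s) : (fun x => f (c * x)) =O[atTop] fun x => x ^ s := by
  refine (hf.comp_tendsto (tendsto_id.const_mul_atTop hc)).trans ?_
  refine ((isBigO_refl (fun x : ℝ => x ^ s) atTop).const_mul_left (c ^ s)).congr' ?_ .rfl
  filter_upwards [eventually_ge_atTop 0] with x hx
  exact (Real.mul_rpow hc.le hx).symm

section MaxTailEvents

variable {Ω : Type*} {U V : Ω → ℝ}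

lemma setOf_le_max_add_subset {a b v w : ℝ} (ha : 1 ≤ a) (hb : 1 ≤ b) (hv : 0 < v)
    (hw : (a + b) * v = w) :
    {ω | w ≤ max (U ω - V ω) 0 + ((a - 1) * U ω + b * V ω)} ⊆
      {ω | v ≤ U ω ∧ w ≤ a * U ω + (b - 1) * V ω} ∪
        {ω | v ≤ V ω ∧ w ≤ b * V ω + (a - 1) * U ω} ∪ ({ω | v ≤ U ω} ∩ {ω | v ≤ V ω}) := by
  intro ω (hω : w ≤ max (U ω - V ω) 0 + ((a - 1) * U ω + b * V ω))
  rcases le_or_gt v (U ω) with hvU | hUv <;> rcases le_or_gt v (V ω) with hvV | hVv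
  · exact Or.inr ⟨hvU, hvV⟩
  · rw [max_eq_left (by linarith)] at hω
    exact Or.inl (Or.inl ⟨hvU, by linarith⟩)
  · rw [max_eq_right (by linarith)] at hω
    exact Or.inl (Or.inr ⟨hvV, by linarith⟩)
  · rcases max_cases (U ω - V ω) 0 with h | h <;> rw [h.1] at hω <;> nlinarith

lemma union_subset_setOf_le_max_add {a b v w : ℝ} :
    {ω | v ≤ U ω ∧ w ≤ a * U ω + (b - 1) * V ω} ∪ {ω | v ≤ V ω ∧ w ≤ b * V ω + (a - 1) * U ω} ⊆
      {ω | w ≤ max (U ω - V ω) 0 + ((a - 1) * U ω + b * V ω)} := by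
  rintro ω (⟨-, hω⟩ | ⟨-, hω⟩)
  · exact hω.trans (by linarith [le_max_left (U ω - V ω) 0])
  · exact hω.trans (by linarith [le_max_right (U ω - V ω) 0])

end MaxTailEvents

section MaxTail

variable {Ω : Type*} [MeasurableSpace Ω] {P : Measure Ω} {U V : Ω → ℝ}

lemma measureReal_add_le_measureReal_le_max_add [IsFiniteMeasure P] (hU : Measurable U)
    (hV : Measurable V) {a b v w : ℝ} :
    P.real {ω | v ≤ U ω ∧ w ≤ a * U ω + (b - 1) * V ω}
        + P.real {ω | v ≤ V ω ∧ w ≤ b * V ω + (a - 1) * U ω}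
      ≤ P.real {ω | w ≤ max (U ω - V ω) 0 + ((a - 1) * U ω + b * V ω)}
        + P.real ({ω | v ≤ U ω} ∩ {ω | v ≤ V ω}) := by
  have hmeas : MeasurableSet {ω | v ≤ V ω ∧ w ≤ b * V ω + (a - 1) * U ω} :=
    (measurableSet_le measurable_const hV).inter
      (measurableSet_le measurable_const ((hV.const_mul b).add (hU.const_mul (a - 1))))
  refine (measureReal_union_add_inter hmeas).ge.trans ?_
  exact add_le_add (measureReal_mono union_subset_setOf_le_max_add)
    (measureReal_mono (inter_subset_inter (fun _ => And.left) fun _ => And.left))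

lemma measureReal_le_max_add_le [IsFiniteMeasure P] {a b v w : ℝ} (ha : 1 ≤ a) (hb : 1 ≤ b)
    (hv : 0 < v) (hw : (a + b) * v = w) :
    P.real {ω | w ≤ max (U ω - V ω) 0 + ((a - 1) * U ω + b * V ω)}
      ≤ P.real {ω | v ≤ U ω ∧ w ≤ a * U ω + (b - 1) * V ω}
        + P.real {ω | v ≤ V ω ∧ w ≤ b * V ω + (a - 1) * U ω}
        + P.real ({ω | v ≤ U ω} ∩ {ω | v ≤ V ω}) :=
  (measureReal_mono (setOf_le_max_add_subset ha hb hv hw)).trans <|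
    (measureReal_union_le _ _).trans (add_le_add_left (measureReal_union_le _ _) _)

lemma measureReal_le_const_mul_sub_isBigO {Y k a : ℝ} (ha : 0 < a)
    (hT : (fun x => P.real {ω | x ≤ U ω} - k * x ^ (-Y)) =O[atTop] fun x => x ^ (-Y - 1)) :
    (fun x => P.real {ω | x ≤ a * U ω} - k * a ^ Y * x ^ (-Y))
      =O[atTop] fun x => x ^ (-Y - 1) := by
  refine (isBigO_rpow_comp_const_mul (inv_pos.2 ha) hT).congr' ?_ .rfl
  filter_upwards [eventually_ge_atTop 0] with x hx
  rw [Real.mul_rpow (inv_nonneg.2 ha.le) hx, Real.inv_rpow ha.le, Real.rpow_neg ha.le, inv_inv,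
    ← mul_assoc]
  simp only [inv_mul_le_iff₀ ha]

lemma measureReal_le_isBigO {Y k : ℝ}
    (hT : (fun x => P.real {ω | x ≤ U ω} - k * x ^ (-Y)) =O[atTop] fun x => x ^ (-Y - 1)) :
    (fun x => P.real {ω | x ≤ U ω}) =O[atTop] fun x => x ^ (-Y) := by
  have hpow : (fun x : ℝ => x ^ (-Y - 1)) =O[atTop] fun x => x ^ (-Y) := by
    refine IsBigO.of_norm_eventuallyLE ?_
    filter_upwards [eventually_ge_atTop 1] with x hx
    rw [Real.norm_of_nonneg (by positivity)]
    exact Real.rpow_le_rpow_of_exponent_le hx (by linarith)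
  simpa using (hT.trans hpow).add ((isBigO_refl (fun x : ℝ => x ^ (-Y)) atTop).const_mul_left k)

lemma measureReal_inter_le_isBigO (hUV : IndepFun U V P) {Y kU kV : ℝ} (hY : 1 ≤ Y)
    (hU : (fun x => P.real {ω | x ≤ U ω} - kU * x ^ (-Y)) =O[atTop] fun x => x ^ (-Y - 1))
    (hV : (fun x => P.real {ω | x ≤ V ω} - kV * x ^ (-Y)) =O[atTop] fun x => x ^ (-Y - 1)) :
    (fun x => P.real ({ω | x ≤ U ω} ∩ {ω | x ≤ V ω})) =O[atTop] fun x => x ^ (-Y - 1) := by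
  have hprod : ∀ x, P.real ({ω | x ≤ U ω} ∩ {ω | x ≤ V ω})
      = P.real {ω | x ≤ U ω} * P.real {ω | x ≤ V ω} := fun x => by
    rw [Measure.real, Measure.real, Measure.real, ← ENNReal.toReal_mul]
    exact congrArg _
      (hUV.measure_inter_preimage_eq_mul (Ici x) (Ici x) measurableSet_Ici measurableSet_Ici)
  simp only [hprod]
  refine ((measureReal_le_isBigO hU).mul (measureReal_le_isBigO hV)).trans
    (IsBigO.of_norm_eventuallyLE ?_)
  filter_upwards [eventually_ge_atTop 1] with x hx
  rw [← Real.rpow_add (by positivity), Real.norm_of_nonneg (by positivity)]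
  exact Real.rpow_le_rpow_of_exponent_le hx (by linarith)

lemma measureReal_le_max_add_sub_isBigO [IsProbabilityMeasure P] (hU : Measurable U)
    (hV : Measurable V) (hUV : IndepFun U V P) (hUint : Integrable U P) (hVint : Integrable V P)
    {Y kU kV a b : ℝ} (hY : 1 ≤ Y) (hkU : 0 ≤ kU) (hkV : 0 ≤ kV) (ha : 1 ≤ a) (hb : 1 ≤ b)
    (hUtail : (fun x => P.real {ω | x ≤ U ω} - kU * x ^ (-Y)) =O[atTop] fun x => x ^ (-Y - 1))
    (hVtail : (fun x => P.real {ω | x ≤ V ω} - kV * x ^ (-Y)) =O[atTop] fun x => x ^ (-Y - 1)) :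
    (fun w => P.real {ω | w ≤ max (U ω - V ω) 0 + ((a - 1) * U ω + b * V ω)}
      - (kU * a ^ Y + kV * b ^ Y) * w ^ (-Y)) =O[atTop] fun w => w ^ (-Y - 1) := by
  have ha0 : 0 < a := by linarith
  have hb0 : 0 < b := by linarith
  have hjumpU := measureReal_le_and_le_add_sub_isBigO (hU.const_mul a) (hV.const_mul (b - 1))
    (hUV.comp (measurable_const_mul a) (measurable_const_mul (b - 1))) (hVint.const_mul (b - 1))
    (by linarith) (by positivity) (p := a / (a + b)) (by positivity)
    ((div_le_one (by positivity)).2 (by linarith)) (measureReal_le_const_mul_sub_isBigO ha0 hUtail)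
  have hjumpV := measureReal_le_and_le_add_sub_isBigO (hV.const_mul b) (hU.const_mul (a - 1))
    (hUV.symm.comp (measurable_const_mul b) (measurable_const_mul (a - 1)))
    (hUint.const_mul (a - 1)) (by linarith) (by positivity) (p := b / (a + b)) (by positivity)
    ((div_le_one (by positivity)).2 (by linarith)) (measureReal_le_const_mul_sub_isBigO hb0 hVtail)
  have hboth := isBigO_rpow_comp_const_mul (c := (a + b)⁻¹) (by positivity)
    (measureReal_inter_le_isBigO hUV hY hUtail hVtail)
  have hscale : ∀ {c : ℝ}, 0 < c → ∀ w x, c / (a + b) * w ≤ c * x ↔ (a + b)⁻¹ * w ≤ x :=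
    fun hc w x => by rw [div_eq_mul_inv, mul_assoc, mul_le_mul_iff_right₀ hc]
  simp only [hscale ha0] at hjumpU
  simp only [hscale hb0] at hjumpV
  set jumpU : ℝ → ℝ := fun w => P.real {ω | (a + b)⁻¹ * w ≤ U ω ∧ w ≤ a * U ω + (b - 1) * V ω}
  set jumpV : ℝ → ℝ := fun w => P.real {ω | (a + b)⁻¹ * w ≤ V ω ∧ w ≤ b * V ω + (a - 1) * U ω}
  set both : ℝ → ℝ := fun w =>
    P.real ({ω | (a + b)⁻¹ * w ≤ U ω} ∩ {ω | (a + b)⁻¹ * w ≤ V ω})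
  have hsum := hjumpU.add hjumpV
  refine isBigO_sub_of_le_of_le (f₁ := fun w => jumpU w + jumpV w - both w)
    (f₂ := fun w => jumpU w + jumpV w + both w)
    ((hsum.sub hboth).congr_left fun w => by ring)
    ((hsum.add hboth).congr_left fun w => by ring)
    (.of_forall fun w => sub_le_iff_le_add.2 (measureReal_add_le_measureReal_le_max_add hU hV)) ?_
  filter_upwards [eventually_gt_atTop 0] with w hw
  exact measureReal_le_max_add_le ha hb (by positivity) (mul_inv_cancel_left₀ (by positivity) w)

end MaxTail

/-! ### Second-order expansion -/

/-- The second-order remainder `1 - e ^ (-x) - x`, whose expectation at `x = s * X` is expanded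
as `s → 0⁺`. -/
noncomputable def expRemainder (x : ℝ) : ℝ :=
  1 - Real.exp (-x) - x

lemma continuous_expRemainder : Continuous expRemainder := by
  unfold expRemainder
  fun_prop

lemma abs_exp_sub_sum_le (x : ℝ) (n : ℕ) :
    |Real.exp x - ∑ m ∈ Finset.range n, x ^ m / m.factorial| ≤ |x| ^ n * Real.exp |x| := by
  have h := Complex.norm_exp_sub_sum_le_norm_mul_exp x n
  norm_cast at h

lemma abs_expRemainder_le (x : ℝ) : |expRemainder x| ≤ |x| ^ 2 * Real.exp |x| := by
  have h := abs_exp_sub_sum_le (-x) 2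
  have hsum : Real.exp (-x) - ∑ i ∈ Finset.range 2, (-x) ^ i / (i.factorial : ℝ)
      = -expRemainder x := by
    norm_num [Finset.sum_range_succ, expRemainder]
    ring
  rwa [hsum, abs_neg, abs_neg] at h

lemma abs_expRemainder_add_sq_div_two_le (x : ℝ) :
    |expRemainder x + x ^ 2 / 2| ≤ |x| ^ 3 * Real.exp |x| := by
  have h := abs_exp_sub_sum_le (-x) 3
  have hsum : Real.exp (-x) - ∑ i ∈ Finset.range 3, (-x) ^ i / (i.factorial : ℝ)
      = -(expRemainder x + x ^ 2 / 2) := by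
    norm_num [Finset.sum_range_succ, expRemainder, Nat.factorial]
    ring
  rwa [hsum, abs_neg, abs_neg] at h

lemma tendsto_inv_sq_mul_expRemainder_mul (x : ℝ) :
    Tendsto (fun s : ℝ => (s ^ 2)⁻¹ * expRemainder (s * x)) (𝓝[>] 0) (𝓝 (-(1 / 2) * x ^ 2)) := by
  have hbound : Tendsto (fun s : ℝ => s * (|x| ^ 3 * Real.exp (s * |x|))) (𝓝[>] 0) (𝓝 0) := by
    have hcont : Continuous fun s : ℝ => s * (|x| ^ 3 * Real.exp (s * |x|)) := by fun_prop
    simpa using (hcont.tendsto 0).mono_left nhdsWithin_le_nhds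
  rw [tendsto_iff_norm_sub_tendsto_zero]
  refine squeeze_zero' (.of_forall fun _ => norm_nonneg _) ?_ hbound
  filter_upwards [self_mem_nhdsWithin] with s (hs : 0 < s)
  calc ‖(s ^ 2)⁻¹ * expRemainder (s * x) - -(1 / 2) * x ^ 2‖
      = (s ^ 2)⁻¹ * |expRemainder (s * x) + (s * x) ^ 2 / 2| := by
        rw [← abs_of_pos (show 0 < (s ^ 2)⁻¹ by positivity), ← abs_mul, Real.norm_eq_abs,
          abs_of_pos (show 0 < (s ^ 2)⁻¹ by positivity)]
        congr 1
        field_simp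
        ring
    _ ≤ (s ^ 2)⁻¹ * (|s * x| ^ 3 * Real.exp |s * x|) := by
        gcongr
        exact abs_expRemainder_add_sq_div_two_le _
    _ = s * (|x| ^ 3 * Real.exp (s * |x|)) := by
        rw [abs_mul, abs_of_pos hs]
        field_simp

lemma abs_inv_sq_mul_expRemainder_mul_le {s x : ℝ} (hs : s ∈ Ioc 0 1) :
    |(s ^ 2)⁻¹ * expRemainder (s * x)| ≤ 2 * Real.exp (2 * |x|) := by
  have hs0 : 0 < s := hs.1
  calc |(s ^ 2)⁻¹ * expRemainder (s * x)|
      = (s ^ 2)⁻¹ * |expRemainder (s * x)| := by rw [abs_mul, abs_of_pos (by positivity)]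
    _ ≤ (s ^ 2)⁻¹ * ((s * |x|) ^ 2 * Real.exp (s * |x|)) := by
        gcongr
        simpa [abs_mul, abs_of_pos hs0] using abs_expRemainder_le (s * x)
    _ = |x| ^ 2 * Real.exp (s * |x|) := by field_simp
    _ ≤ (2 * Real.exp |x|) * Real.exp |x| := by
        gcongr
        · linarith [Real.quadratic_le_exp_of_nonneg (abs_nonneg x), abs_nonneg x]
        · exact mul_le_of_le_one_left (abs_nonneg x) hs.2
    _ = 2 * Real.exp (2 * |x|) := by rw [mul_assoc, ← Real.exp_add, two_mul |x|]

lemma abs_exp_neg_sub_one_le (x : ℝ) :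
    |Real.exp (-x) - 1| ≤ |x| * (1 + Real.exp (-x)) := by
  have hinv : Real.exp x * Real.exp (-x) = 1 := by
    rw [← Real.exp_add, add_neg_cancel, Real.exp_zero]
  have hlower := Real.add_one_le_exp (-x)
  have hupper := mul_le_mul_of_nonneg_right (Real.add_one_le_exp x) (Real.exp_pos (-x)).le
  have hpos := Real.exp_pos (-x)
  have habs := abs_nonneg x
  rw [abs_le]
  constructor <;> nlinarith [le_abs_self x, neg_le_abs x]

lemma exp_neg_mul_le_one_add_exp_neg {s : ℝ} (hs : s ∈ Ioc 0 1) (x : ℝ) :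
    Real.exp (-(s * x)) ≤ 1 + Real.exp (-x) := by
  rcases le_total 0 x with hx | hx
  · exact (Real.exp_le_one_iff.2 (neg_nonpos.2 (mul_nonneg hs.1.le hx))).trans
      (le_add_of_nonneg_right (Real.exp_pos _).le)
  · exact (Real.exp_le_exp.2 (by nlinarith [hs.2])).trans (le_add_of_nonneg_left zero_le_one)

lemma expRemainder_add_sub (x y : ℝ) :
    expRemainder (x + y) - expRemainder x
      = y * (Real.exp (-x) - 1) + Real.exp (-x) * expRemainder y := by
  rw [expRemainder, expRemainder, expRemainder, neg_add, Real.exp_add]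
  ring

/-- The integrable envelope controlling the sensitivity of `expRemainder (s * x)` to `x`,
uniformly in `s ∈ (0, 1]`. -/
noncomputable def expRemainderEnvelope (x : ℝ) : ℝ :=
  |x| * (2 + Real.exp (-x)) + Real.exp 1 * (1 + Real.exp (-x))

lemma abs_expRemainder_mul_sub_le {s x y c : ℝ} (hs : s ∈ Ioc 0 1) (hc : c ≤ 1)
    (hxy : |y - x| ≤ c) :
    |expRemainder (s * y) - expRemainder (s * x)| ≤ s ^ 2 * c * expRemainderEnvelope x := by
  set d := y - x
  have hs0 : 0 < s := hs.1
  have hsd : |s * d| ≤ s * c := by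
    rw [abs_mul, abs_of_pos hs0]
    gcongr
  have hsc : s * c ≤ 1 := by nlinarith [hs.2]
  have hc0 : 0 ≤ c := (abs_nonneg d).trans hxy
  have hsplit := expRemainder_add_sub (s * x) (s * d)
  rw [← mul_add, add_sub_cancel] at hsplit
  have hexp := exp_neg_mul_le_one_add_exp_neg hs x
  have hfirst : |Real.exp (-(s * x)) - 1| ≤ s * (|x| * (2 + Real.exp (-x))) := by
    refine (abs_exp_neg_sub_one_le (s * x)).trans ?_
    rw [abs_mul, abs_of_pos hs0, mul_assoc]
    have hfactor : 1 + Real.exp (-(s * x)) ≤ 2 + Real.exp (-x) := by linarith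
    gcongr s * (|x| * ?_)
  have hsecond : |expRemainder (s * d)| ≤ s ^ 2 * c * Real.exp 1 := by
    calc |expRemainder (s * d)| ≤ |s * d| ^ 2 * Real.exp |s * d| := abs_expRemainder_le _
      _ ≤ (s * c) ^ 2 * Real.exp 1 := by
          gcongr
          exact hsd.trans hsc
      _ = s ^ 2 * c * Real.exp 1 * c := by ring
      _ ≤ s ^ 2 * c * Real.exp 1 := mul_le_of_le_one_right (by positivity) hc
  calc |expRemainder (s * y) - expRemainder (s * x)|
      ≤ |s * d| * |Real.exp (-(s * x)) - 1| + Real.exp (-(s * x)) * |expRemainder (s * d)| := by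
        rw [hsplit]
        refine (abs_add_le _ _).trans_eq ?_
        rw [abs_mul (s * d), abs_mul (Real.exp _), Real.abs_exp]
    _ ≤ (s * c) * (s * (|x| * (2 + Real.exp (-x))))
        + (1 + Real.exp (-x)) * (s ^ 2 * c * Real.exp 1) := by gcongr
    _ = s ^ 2 * c * expRemainderEnvelope x := by
        rw [expRemainderEnvelope]
        ring

section Expectation

variable {Ω : Type*} [MeasurableSpace Ω] {P : Measure Ω} {X : Ω → ℝ}

lemma integrable_expRemainderEnvelope [IsFiniteMeasure P] (hX : Integrable X P)
    (hexp : ∀ l : ℝ, 0 ≤ l → Integrable (fun ω => Real.exp (-(l * X ω))) P) :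
    Integrable (fun ω => expRemainderEnvelope (X ω)) P := by
  have hexp_one : Integrable (fun ω => Real.exp (-X ω)) P := by simpa using hexp 1 zero_le_one
  have habs_exp : ∀ x : ℝ, |x| * Real.exp (-x) ≤ |x| + Real.exp (-(2 * x)) := by
    intro x
    have hsq : Real.exp (-(2 * x)) = Real.exp (-x) * Real.exp (-x) := by
      rw [← Real.exp_add]
      congr 1
      ring
    have hlower := Real.add_one_le_exp (-x)
    have hpos := Real.exp_pos (-x)
    rcases le_total 0 x with hx | hx
    · rw [abs_of_nonneg hx]
      nlinarith [Real.exp_le_one_iff.2 (neg_nonpos.2 hx)]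
    · rw [abs_of_nonpos hx]
      nlinarith
  have hprod : Integrable (fun ω => |X ω| * Real.exp (-X ω)) P := by
    refine (hX.abs.add (hexp 2 zero_le_two)).mono'
      (hX.abs.aestronglyMeasurable.mul hexp_one.aestronglyMeasurable) (ae_of_all _ fun ω => ?_)
    rw [Real.norm_of_nonneg (by positivity)]
    exact habs_exp (X ω)
  refine (((hX.abs.mul_const 2).add hprod).add
    (((integrable_const 1).add hexp_one).const_mul (Real.exp 1))).congr (ae_of_all _ fun ω => ?_)
  simp only [Pi.add_apply, expRemainderEnvelope]
  ring

lemma integrable_expRemainder_mul [IsFiniteMeasure P] (hX : Integrable X P)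
    (hexp : ∀ l : ℝ, 0 ≤ l → Integrable (fun ω => Real.exp (-(l * X ω))) P) {s : ℝ} (hs : 0 ≤ s) :
    Integrable (fun ω => expRemainder (s * X ω)) P :=
  ((integrable_const 1).sub (hexp s hs)).sub (hX.const_mul s)

lemma abs_integral_expRemainder_sub_le [IsFiniteMeasure P] (hX : Integrable X P)
    (hexp : ∀ l : ℝ, 0 ≤ l → Integrable (fun ω => Real.exp (-(l * X ω))) P) {X' : Ω → ℝ}
    (hX' : AEStronglyMeasurable X' P) {s c : ℝ} (hs : s ∈ Ioc 0 1) (hc : c ≤ 1)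
    (hdist : ∀ ω, |X' ω - X ω| ≤ c) :
    |∫ ω, expRemainder (s * X' ω) ∂P - ∫ ω, expRemainder (s * X ω) ∂P|
      ≤ s ^ 2 * c * ∫ ω, expRemainderEnvelope (X ω) ∂P := by
  have henv := (integrable_expRemainderEnvelope hX hexp).const_mul (s ^ 2 * c)
  have hint := integrable_expRemainder_mul hX hexp hs.1.le
  have hle : ∀ᵐ ω ∂P, ‖expRemainder (s * X' ω) - expRemainder (s * X ω)‖
      ≤ s ^ 2 * c * expRemainderEnvelope (X ω) :=
    ae_of_all _ fun ω => abs_expRemainder_mul_sub_le hs hc (hdist ω)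
  have hmeas : AEStronglyMeasurable (fun ω => expRemainder (s * X' ω)) P :=
    continuous_expRemainder.comp_aestronglyMeasurable (hX'.const_mul s)
  have hint' : Integrable (fun ω => expRemainder (s * X' ω)) P := by
    simpa using (henv.mono' (hmeas.sub hint.aestronglyMeasurable) hle).add hint
  rw [← integral_sub hint' hint, ← integral_const_mul]
  exact norm_integral_le_of_norm_le henv hle

lemma tendsto_setIntegral_expRemainder (hX : Measurable X)
    (hexp : Integrable (fun ω => Real.exp (-(2 * X ω))) P) :
    Tendsto (fun s : ℝ => (s ^ 2)⁻¹ * ∫ ω in {ω | X ω ≤ 0}, expRemainder (s * X ω) ∂P) (𝓝[>] 0)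
      (𝓝 (-(1 / 2) * ∫ ω in {ω | X ω ≤ 0}, X ω ^ 2 ∂P)) := by
  simp only [← integral_const_mul]
  refine tendsto_integral_filter_of_dominated_convergence (fun ω => 2 * Real.exp (-(2 * X ω)))
    (.of_forall fun s => ?_) ?_ (hexp.const_mul 2).integrableOn
    (ae_of_all _ fun ω => tendsto_inv_sq_mul_expRemainder_mul (X ω))
  · exact ((continuous_expRemainder.measurable.comp (hX.const_mul s)).const_mul
      _).aestronglyMeasurable
  · filter_upwards [Ioc_mem_nhdsGT zero_lt_one] with s hs
    filter_upwards [self_mem_ae_restrict (measurableSet_le hX measurable_const)] with ω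
      (hω : X ω ≤ 0)
    simpa [abs_of_nonpos hω] using abs_inv_sq_mul_expRemainder_mul_le (x := X ω) hs

end Expectation

section LayerCake

variable {Ω : Type*} [MeasurableSpace Ω] {P : Measure Ω} {X : Ω → ℝ}

lemma integral_intervalIntegral_eq_integral_measureReal_mul [IsFiniteMeasure P]
    (hX : Measurable X) (hX0 : ∀ ω, 0 ≤ X ω) {g : ℝ → ℝ} (hg : Continuous g)
    (hg0 : ∀ x, 0 ≤ x → 0 ≤ g x) :
    ∫ ω, (∫ w in 0..X ω, g w) ∂P = ∫ w in Ioi 0, P.real {ω | w ≤ X ω} * g w := by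
  have hg_nonneg : ∀ᵐ w ∂volume.restrict (Ioi 0), 0 ≤ g w := by
    filter_upwards [self_mem_ae_restrict measurableSet_Ioi] with w (hw : 0 < w) using hg0 w hw.le
  have hcake := lintegral_comp_eq_lintegral_meas_le_mul P (ae_of_all _ hX0) hX.aemeasurable
    (fun t _ => hg.intervalIntegrable 0 t) hg_nonneg
  have hprim : Continuous fun x => ∫ w in 0..x, g w :=
    intervalIntegral.continuous_primitive (fun _ _ => hg.intervalIntegrable _ _) 0
  have htail : Antitone fun w => P.real {ω | w ≤ X ω} :=
    fun _ _ hvw => measureReal_mono fun _ hω => hvw.trans hω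
  rw [integral_eq_lintegral_of_nonneg_ae, integral_eq_lintegral_of_nonneg_ae, hcake]
  · refine congrArg ENNReal.toReal (lintegral_congr fun w => ?_)
    rw [ENNReal.ofReal_mul measureReal_nonneg, ofReal_measureReal]
  · filter_upwards [hg_nonneg] with w hw using mul_nonneg measureReal_nonneg hw
  · exact (htail.measurable.mul hg.measurable).aestronglyMeasurable
  · exact ae_of_all _ fun ω => intervalIntegral.integral_nonneg (hX0 ω) fun w hw => hg0 w hw.1
  · exact (hprim.measurable.comp hX).aestronglyMeasurable

lemma intervalIntegral_mul_one_sub_exp_neg_mul (s x : ℝ) :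
    ∫ w in 0..x, s * (1 - Real.exp (-(s * w))) = -expRemainder (s * x) := by
  have hderiv : ∀ w ∈ uIcc 0 x, HasDerivAt (fun w : ℝ => -expRemainder (s * w))
      (s * (1 - Real.exp (-(s * w)))) w := fun w _ => by
    have hlin : HasDerivAt (fun w : ℝ => s * w) s w := by
      simpa using (hasDerivAt_id w).const_mul s
    have hneg : HasDerivAt (fun w : ℝ => -(s * w)) (-s) w := hlin.neg
    exact (((hneg.exp.const_sub 1).sub hlin).neg).congr_deriv (by ring)
  rw [intervalIntegral.integral_eq_sub_of_hasDerivAt hderiv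
    (Continuous.intervalIntegrable (by fun_prop) _ _)]
  simp [expRemainder]

lemma integral_expRemainder_mul_max [IsFiniteMeasure P] (hX : Measurable X) {s : ℝ} (hs : 0 ≤ s) :
    ∫ ω, expRemainder (s * max (X ω) 0) ∂P
      = -(s * ∫ w in Ioi 0, (1 - Real.exp (-(s * w))) * P.real {ω | w ≤ X ω}) := by
  have hnonneg : ∀ w, 0 ≤ w → 0 ≤ s * (1 - Real.exp (-(s * w))) := fun w hw =>
    mul_nonneg hs (sub_nonneg.2 (Real.exp_le_one_iff.2 (neg_nonpos.2 (mul_nonneg hs hw))))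
  have hcake := integral_intervalIntegral_eq_integral_measureReal_mul (P := P)
    (hX.max measurable_const) (fun ω => le_max_right (X ω) 0)
    (g := fun w => s * (1 - Real.exp (-(s * w)))) (by fun_prop) hnonneg
  simp only [intervalIntegral_mul_one_sub_exp_neg_mul, integral_neg] at hcake
  rw [← neg_eq_iff_eq_neg, hcake, ← integral_const_mul]
  refine setIntegral_congr_fun measurableSet_Ioi fun w (hw : 0 < w) => ?_
  simp only [le_max_iff, hw.not_ge, or_false]
  ring

lemma integral_expRemainder_mul_eq_add [IsFiniteMeasure P] (hX : Measurable X) {s : ℝ}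
    (hint : Integrable (fun ω => expRemainder (s * X ω)) P) :
    ∫ ω, expRemainder (s * X ω) ∂P = ∫ ω in {ω | X ω ≤ 0}, expRemainder (s * X ω) ∂P
      + ∫ ω, expRemainder (s * max (X ω) 0) ∂P := by
  have hset : MeasurableSet {ω | X ω ≤ 0} := measurableSet_le hX measurable_const
  have hpos : (fun ω => expRemainder (s * max (X ω) 0))
      = {ω | X ω ≤ 0}ᶜ.indicator fun ω => expRemainder (s * X ω) := by
    ext ω
    by_cases hω : X ω ≤ 0
    · simp [hω, expRemainder]
    · simp [hω, (not_le.1 hω).le]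
  rw [hpos, integral_indicator hset.compl, integral_add_compl hset hint]

end LayerCake

section LaplaceKernel

variable {f : ℝ → ℝ}

lemma abs_one_sub_exp_neg_mul_le {s w : ℝ} (hs : 0 ≤ s) (hw : 0 ≤ w) :
    |1 - Real.exp (-(s * w))| ≤ s * w := by
  have hsw := mul_nonneg hs hw
  rw [abs_of_nonneg (sub_nonneg.2 (Real.exp_le_one_iff.2 (neg_nonpos.2 hsw)))]
  linarith [Real.add_one_le_exp (-(s * w))]

lemma abs_one_sub_exp_neg_mul_mul_le {s w : ℝ} (hs : 0 ≤ s) (hw : 0 ≤ w) :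
    |(1 - Real.exp (-(s * w))) * f w| ≤ s * |w * f w| := by
  rw [abs_mul, abs_mul, abs_of_nonneg hw, ← mul_assoc]
  exact mul_le_mul_of_nonneg_right (abs_one_sub_exp_neg_mul_le hs hw) (abs_nonneg _)

lemma integrableOn_one_sub_exp_neg_mul_mul (hf : AEStronglyMeasurable f (volume.restrict (Ioi 0)))
    (hint : IntegrableOn (fun w => w * f w) (Ioi 0)) {s : ℝ} (hs : 0 ≤ s) :
    IntegrableOn (fun w => (1 - Real.exp (-(s * w))) * f w) (Ioi 0) := by
  have hkernel : Continuous fun w => 1 - Real.exp (-(s * w)) := by fun_prop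
  refine (hint.norm.const_mul s).mono' (hkernel.aestronglyMeasurable.mul hf) ?_
  filter_upwards [self_mem_ae_restrict measurableSet_Ioi] with w (hw : 0 < w) using
    abs_one_sub_exp_neg_mul_mul_le hs hw.le

lemma tendsto_inv_mul_integral_one_sub_exp_neg_mul
    (hf : AEStronglyMeasurable f (volume.restrict (Ioi 0)))
    (hint : IntegrableOn (fun w => w * f w) (Ioi 0)) :
    Tendsto (fun s : ℝ => s⁻¹ * ∫ w in Ioi 0, (1 - Real.exp (-(s * w))) * f w) (𝓝[>] 0)
      (𝓝 (∫ w in Ioi 0, w * f w)) := by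
  simp only [← integral_const_mul]
  refine tendsto_integral_filter_of_dominated_convergence (fun w => |w * f w|)
    (.of_forall fun s => ?_) ?_ hint.norm (ae_of_all _ fun w => ?_)
  · have hkernel : Continuous fun w => 1 - Real.exp (-(s * w)) := by fun_prop
    exact (hkernel.aestronglyMeasurable.mul hf).const_mul _
  · filter_upwards [self_mem_nhdsWithin] with s (hs : 0 < s)
    filter_upwards [self_mem_ae_restrict measurableSet_Ioi] with w (hw : 0 < w)
    rw [norm_mul, norm_inv, Real.norm_of_nonneg hs.le, inv_mul_le_iff₀ hs]
    exact abs_one_sub_exp_neg_mul_mul_le hs.le hw.le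
  · have hderiv : HasDerivAt (fun s : ℝ => 1 - Real.exp (-(s * w))) w 0 := by
      have hlin : HasDerivAt (fun s : ℝ => s * w) w 0 := by
        simpa using (hasDerivAt_id (0 : ℝ)).mul_const w
      exact (hlin.neg.exp.const_sub 1).congr_deriv (by simp)
    simpa [mul_assoc] using hderiv.tendsto_slope_zero_right.mul_const (f w)

end LaplaceKernel

section TailExpansion

variable {Ω : Type*} [MeasurableSpace Ω] {P : Measure Ω} [IsProbabilityMeasure P] {X : Ω → ℝ}
  {Y k : ℝ}

lemma integrableOn_mul_measureReal_sub (hY : Y ∈ Ioo 1 2)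
    (hT : (fun w => P.real {ω | w ≤ X ω} - k * w ^ (-Y)) =O[atTop] fun w => w ^ (-Y - 1)) :
    IntegrableOn (fun w => w * (P.real {ω | w ≤ X ω} - k * w ^ (-Y))) (Ioi 0) := by
  have hmeas : Measurable fun w => P.real {ω | w ≤ X ω} := antitone_measureReal_le.measurable
  have hbig : (fun w => w * (P.real {ω | w ≤ X ω} - k * w ^ (-Y)))
      =O[atTop] fun w => w ^ (-Y) := by
    refine ((isBigO_refl (fun w : ℝ => w) atTop).mul hT).congr' .rfl ?_
    filter_upwards [eventually_gt_atTop 0] with w hw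
    rw [Real.rpow_sub_one hw.ne', mul_div_cancel₀ _ hw.ne']
  obtain ⟨a, ha⟩ := integrableAtFilter_atTop_iff.1 (hbig.integrableAtFilter
    (Measurable.stronglyMeasurable (by fun_prop)).stronglyMeasurableAtFilter
    (integrableAtFilter_rpow_atTop_iff.2 (by linarith [hY.1])))
  refine IntegrableOn.mono_set (t := Ioc 0 a ∪ Ici a) (.union ?_ ha) fun w hw => ?_
  · have htail : IntegrableOn (fun w => w * P.real {ω | w ≤ X ω}) (Ioc 0 a) := by
      refine Measure.integrableOn_of_bounded (M := a) measure_Ioc_lt_top.ne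
        (by fun_prop) ?_
      filter_upwards [self_mem_ae_restrict measurableSet_Ioc] with w hw
      rw [norm_mul, Real.norm_of_nonneg hw.1.le, Real.norm_of_nonneg measureReal_nonneg]
      exact (mul_le_of_le_one_right hw.1.le measureReal_le_one).trans hw.2
    have hpow : IntegrableOn (fun w : ℝ => w ^ (1 - Y)) (Ioc 0 a) :=
      (intervalIntegral.intervalIntegrable_rpow' (by linarith [hY.2] : -1 < 1 - Y)).1
    refine (htail.sub (hpow.const_mul k)).congr_fun (fun w hw => ?_) measurableSet_Ioc
    simp only [Pi.sub_apply]
    rw [sub_eq_add_neg 1 Y, Real.rpow_add hw.1, Real.rpow_one]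
    ring
  · exact (le_or_gt w a).imp (⟨hw, ·⟩) le_of_lt

lemma integrableOn_one_sub_exp_neg_mul_mul_rpow (hY : Y ∈ Ioo 1 2) {s : ℝ} (hs : 0 ≤ s) :
    IntegrableOn (fun w => (1 - Real.exp (-(s * w))) * w ^ (-Y)) (Ioi 0) := by
  have hkernel : Continuous fun w => 1 - Real.exp (-(s * w)) := by fun_prop
  refine (integrableOn_rpow_smul_of_norm_le (c := max s 1) hY hkernel.aestronglyMeasurable
    fun w hw => ?_).congr_fun (fun w _ => mul_comm _ _) measurableSet_Ioi
  rw [norm_sub_rev]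
  simpa using abs_exp_neg_mul_sub_one_le hs hw.le

lemma integral_one_sub_exp_neg_mul_mul_rpow (hY : Y ∈ Ioo 1 2) {s : ℝ} (hs : 0 < s) :
    ∫ w in Ioi 0, (1 - Real.exp (-(s * w))) * w ^ (-Y) = -(Real.Gamma (1 - Y) * s ^ (Y - 1)) := by
  rw [← integral_rpow_mul_exp_neg_mul_sub_one hY hs, ← integral_neg]
  congr 1
  ext w
  rw [neg_mul]
  ring

lemma integral_expRemainder_mul_max_eq (hX : Measurable X) (hY : Y ∈ Ioo 1 2)
    (hT : (fun w => P.real {ω | w ≤ X ω} - k * w ^ (-Y)) =O[atTop] fun w => w ^ (-Y - 1))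
    {s : ℝ} (hs : 0 < s) :
    ∫ ω, expRemainder (s * max (X ω) 0) ∂P = k * Real.Gamma (1 - Y) * s ^ Y
      - s * ∫ w in Ioi 0, (1 - Real.exp (-(s * w))) * (P.real {ω | w ≤ X ω} - k * w ^ (-Y)) := by
  have hmeas : Measurable fun w => P.real {ω | w ≤ X ω} := antitone_measureReal_le.measurable
  have hrest := integrableOn_one_sub_exp_neg_mul_mul
    (Measurable.aestronglyMeasurable (by fun_prop)) (integrableOn_mul_measureReal_sub hY hT) hs.le
  have hpareto := (integrableOn_one_sub_exp_neg_mul_mul_rpow hY hs.le).const_mul k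
  have hsplit : ∫ w in Ioi 0, (1 - Real.exp (-(s * w))) * P.real {ω | w ≤ X ω}
      = (∫ w in Ioi 0, (1 - Real.exp (-(s * w))) * (P.real {ω | w ≤ X ω} - k * w ^ (-Y)))
        + k * -(Real.Gamma (1 - Y) * s ^ (Y - 1)) := by
    rw [← integral_one_sub_exp_neg_mul_mul_rpow hY hs, ← integral_const_mul,
      ← integral_add hrest hpareto]
    congr 1
    ext w
    ring
  have hpow : s ^ Y = s * s ^ (Y - 1) := by
    rw [Real.rpow_sub_one hs.ne', mul_div_cancel₀ _ hs.ne']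
  rw [integral_expRemainder_mul_max hX hs.le, hsplit, hpow, mul_add, mul_neg, mul_neg]
  generalize s * ∫ w in Ioi 0, (1 - Real.exp (-(s * w))) * (P.real {ω | w ≤ X ω} - k * w ^ (-Y)) = I
  ring

lemma tendsto_inv_sq_mul_integral_expRemainder_sub (hX : Measurable X) (hXint : Integrable X P)
    (hexp : ∀ l : ℝ, 0 ≤ l → Integrable (fun ω => Real.exp (-(l * X ω))) P) (hY : Y ∈ Ioo 1 2)
    (hT : (fun w => P.real {ω | w ≤ X ω} - k * w ^ (-Y)) =O[atTop] fun w => w ^ (-Y - 1)) :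
    Tendsto (fun s : ℝ => (s ^ 2)⁻¹ *
        (∫ ω, expRemainder (s * X ω) ∂P - k * Real.Gamma (1 - Y) * s ^ Y)) (𝓝[>] 0)
      (𝓝 (-(1 / 2) * ∫ ω in {ω | X ω ≤ 0}, X ω ^ 2 ∂P
        - ∫ w in Ioi 0, w * (P.real {ω | w ≤ X ω} - k * w ^ (-Y)))) := by
  have hmeas : Measurable fun w => P.real {ω | w ≤ X ω} := antitone_measureReal_le.measurable
  refine ((tendsto_setIntegral_expRemainder hX (hexp 2 zero_le_two)).sub
    (tendsto_inv_mul_integral_one_sub_exp_neg_mul (Measurable.aestronglyMeasurable (by fun_prop))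
      (integrableOn_mul_measureReal_sub hY hT))).congr' ?_
  filter_upwards [self_mem_nhdsWithin] with s (hs : 0 < s)
  rw [integral_expRemainder_mul_eq_add hX (integrable_expRemainder_mul hXint hexp hs.le),
    integral_expRemainder_mul_max_eq hX hY hT hs]
  field_simp
  ring

end TailExpansion

lemma tendsto_rpow_nhdsGT_zero {a : ℝ} (ha : 0 < a) :
    Tendsto (fun t : ℝ => t ^ a) (𝓝[>] 0) (𝓝[>] 0) := by
  refine tendsto_nhdsWithin_iff.2 ⟨?_, ?_⟩
  · have hcont := (Real.continuousAt_rpow_const 0 a (Or.inr ha.le)).tendsto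
    rw [Real.zero_rpow ha.ne'] at hcont
    exact hcont.mono_left nhdsWithin_le_nhds
  · filter_upwards [self_mem_nhdsWithin] with t ht using Real.rpow_pos_of_pos ht _

lemma isBigO_of_sub_isLittleO_rpow {κ : ℝ → ℝ} {e₁ e₂ a : ℝ} (ha : 1 ≤ a)
    (hκ : (fun t => κ t - (e₁ * t + e₂ * t ^ a)) =o[𝓝[>] 0] fun t => t ^ a) :
    κ =O[𝓝[>] 0] fun t => t := by
  have hpow : (fun t : ℝ => t ^ a) =O[𝓝[>] 0] fun t => t := by
    refine IsBigO.of_norm_eventuallyLE ?_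
    filter_upwards [Ioc_mem_nhdsGT zero_lt_one] with t ht
    rw [Real.norm_of_nonneg (Real.rpow_nonneg ht.1.le a)]
    exact (Real.rpow_le_rpow_of_exponent_ge ht.1 ht.2 ha).trans_eq (Real.rpow_one t)
  have hmain := ((isBigO_refl (fun t : ℝ => t) (𝓝[>] 0)).const_mul_left e₁).add
    (hpow.const_mul_left e₂)
  simpa using (hκ.isBigO.trans hpow).add hmain

lemma tendsto_rpow_mul_sub_div_nhdsGT_zero {κ : ℝ → ℝ} {a : ℝ} (ha : 0 < a) (c : ℝ)
    (hκ : κ =O[𝓝[>] 0] fun t => t) :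
    Tendsto (fun t : ℝ => t ^ a * (c - κ t / t)) (𝓝[>] 0) (𝓝 0) := by
  have hquot : (fun t => κ t / t) =O[𝓝[>] 0] fun _ => (1 : ℝ) := by
    refine (hκ.mul (isBigO_refl (fun t : ℝ => t⁻¹) (𝓝[>] 0))).congr' (.of_forall fun t => rfl) ?_
    filter_upwards [self_mem_nhdsWithin] with t (ht : 0 < t) using mul_inv_cancel₀ ht.ne'
  exact ((tendsto_rpow_nhdsGT_zero ha).mono_right nhdsWithin_le_nhds).zero_mul_isBoundedUnder_le
    (((isBigO_const_const c one_ne_zero _).sub hquot).isBoundedUnder_le)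

section ScaledExpansion

variable {Ω : Type*} [MeasurableSpace Ω] {P : Measure Ω} {X : Ω → ℝ}

lemma tendsto_inv_sq_mul_integral_expRemainder_perturb [IsFiniteMeasure P] {ι : Type*}
    {l : Filter ι} (hX : Integrable X P)
    (hexp : ∀ l : ℝ, 0 ≤ l → Integrable (fun ω => Real.exp (-(l * X ω))) P) {X' : ι → Ω → ℝ}
    {s δ : ι → ℝ} (hX' : ∀ i, AEStronglyMeasurable (X' i) P)
    (hdist : ∀ i ω, |X' i ω - X ω| ≤ δ i) (hs : Tendsto s l (𝓝[>] 0)) (hδ : Tendsto δ l (𝓝 0)) :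
    Tendsto (fun i => (s i ^ 2)⁻¹ *
      (∫ ω, expRemainder (s i * X' i ω) ∂P - ∫ ω, expRemainder (s i * X ω) ∂P)) l (𝓝 0) := by
  refine squeeze_zero_norm' ?_
    (by simpa using hδ.mul_const (∫ ω, expRemainderEnvelope (X ω) ∂P))
  filter_upwards [hs.eventually (Ioc_mem_nhdsGT zero_lt_one), hδ.eventually_le_const zero_lt_one]
    with i hsi hδi
  have hs0 : 0 < s i := hsi.1
  rw [norm_mul, Real.norm_of_nonneg (by positivity), inv_mul_le_iff₀ (by positivity), ← mul_assoc]
  exact abs_integral_expRemainder_sub_le hX hexp (hX' i) hsi hδi (hdist i)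

lemma tendsto_rpow_mul_inv_mul_integral_expRemainder_sub [IsProbabilityMeasure P]
    (hX : Measurable X) (hXint : Integrable X P)
    (hexp : ∀ l : ℝ, 0 ≤ l → Integrable (fun ω => Real.exp (-(l * X ω))) P) {Y k : ℝ}
    (hY : Y ∈ Ioo 1 2)
    (hT : (fun w => P.real {ω | w ≤ X ω} - k * w ^ (-Y)) =O[atTop] fun w => w ^ (-Y - 1))
    {X' : ℝ → Ω → ℝ} {δ : ℝ → ℝ} (hX' : ∀ t, AEStronglyMeasurable (X' t) P)
    (hdist : ∀ t ω, |X' t ω - X ω| ≤ δ t) (hδ : Tendsto δ (𝓝[>] 0) (𝓝 0)) :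
    Tendsto (fun t : ℝ => t ^ (1 - 2 / Y) *
        (t⁻¹ * ∫ ω, expRemainder (t ^ (1 / Y) * X' t ω) ∂P - k * Real.Gamma (1 - Y))) (𝓝[>] 0)
      (𝓝 (-(1 / 2) * ∫ ω in {ω | X ω ≤ 0}, X ω ^ 2 ∂P
        - ∫ w in Ioi 0, w * (P.real {ω | w ≤ X ω} - k * w ^ (-Y)))) := by
  have hY0 : 0 < Y := by linarith [hY.1]
  have hscale := tendsto_rpow_nhdsGT_zero (one_div_pos.2 hY0)
  have hlimit := ((tendsto_inv_sq_mul_integral_expRemainder_sub hX hXint hexp hY hT).comp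
    hscale).add (tendsto_inv_sq_mul_integral_expRemainder_perturb hXint hexp hX' hdist hscale hδ)
  rw [add_zero] at hlimit
  refine hlimit.congr' ?_
  filter_upwards [self_mem_nhdsWithin] with t (ht : 0 < t)
  have hroot : (t ^ (1 / Y)) ^ Y = t := by
    rw [← Real.rpow_mul ht.le, one_div_mul_cancel hY0.ne', Real.rpow_one]
  have hprefactor : t ^ (1 - 2 / Y) = t * ((t ^ (1 / Y)) ^ 2)⁻¹ := by
    rw [← Real.rpow_mul_natCast ht.le, Real.rpow_sub ht, Real.rpow_one, div_eq_mul_inv]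
    congr 3
    push_cast
    ring
  simp only [Function.comp_apply]
  rw [hroot, hprefactor]
  field_simp
  ring

end ScaledExpansion

section MaxExpansion

variable {Ω : Type*} [MeasurableSpace Ω] {P : Measure Ω} {U V : Ω → ℝ}

lemma integrable_exp_neg_mul_max_add {Z W : Ω → ℝ} (hZ : Measurable Z) (hW : Measurable W)
    {l : ℝ} (hl : 0 ≤ l) (hexp : Integrable (fun ω => Real.exp (-(l * W ω))) P) :
    Integrable (fun ω => Real.exp (-(l * (max (Z ω) 0 + W ω)))) P := by
  refine hexp.mono' (by fun_prop) (ae_of_all _ fun ω => ?_)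
  rw [Real.norm_of_nonneg (Real.exp_pos _).le]
  gcongr
  exact le_add_of_nonneg_left (le_max_right _ _)

lemma integrable_exp_neg_mul_linearComb (hUV : IndepFun U V P)
    (hU : ∀ l : ℝ, 0 ≤ l → Integrable (fun ω => Real.exp (-(l * U ω))) P)
    (hV : ∀ l : ℝ, 0 ≤ l → Integrable (fun ω => Real.exp (-(l * V ω))) P)
    {a b l : ℝ} (ha : 0 ≤ a) (hb : 0 ≤ b) (hl : 0 ≤ l) :
    Integrable (fun ω => Real.exp (-(l * (a * U ω + b * V ω)))) P := by
  have hindep : IndepFun (fun ω => Real.exp (-(l * a * U ω))) (fun ω => Real.exp (-(l * b * V ω)))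
      P :=
    hUV.comp (φ := fun x => Real.exp (-(l * a * x))) (ψ := fun x => Real.exp (-(l * b * x)))
      (by fun_prop) (by fun_prop)
  refine (hindep.integrable_mul (hU _ (mul_nonneg hl ha)) (hV _ (mul_nonneg hl hb))).congr
    (ae_of_all _ fun ω => ?_)
  simp only [Pi.mul_apply]
  rw [← Real.exp_add]
  congr 1
  ring

lemma tendsto_rpow_mul_inv_mul_integral_expRemainder_add_max_sub [IsProbabilityMeasure P]
    (hU : Measurable U) (hV : Measurable V) (hUV : IndepFun U V P) (hUint : Integrable U P)
    (hVint : Integrable V P)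
    (hUexp : ∀ l : ℝ, 0 ≤ l → Integrable (fun ω => Real.exp (-(l * U ω))) P)
    (hVexp : ∀ l : ℝ, 0 ≤ l → Integrable (fun ω => Real.exp (-(l * V ω))) P)
    {Y kU kV a b : ℝ} (hY : Y ∈ Ioo 1 2) (hkU : 0 ≤ kU) (hkV : 0 ≤ kV) (ha : 1 ≤ a) (hb : 1 ≤ b)
    (hUtail : (fun x => P.real {ω | x ≤ U ω} - kU * x ^ (-Y)) =O[atTop] fun x => x ^ (-Y - 1))
    (hVtail : (fun x => P.real {ω | x ≤ V ω} - kV * x ^ (-Y)) =O[atTop] fun x => x ^ (-Y - 1))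
    {Z W : Ω → ℝ} (hZ : Z = fun ω => U ω - V ω) (hW : W = fun ω => (a - 1) * U ω + b * V ω)
    {γ : ℝ → ℝ} (hγ : Tendsto γ (𝓝[>] 0) (𝓝 0)) :
    Tendsto (fun t => t ^ (1 - 2 / Y) *
        (t⁻¹ * ∫ ω, expRemainder (t ^ (1 / Y) * (W ω + max (Z ω + γ t) 0)) ∂P
          - (kU * a ^ Y + kV * b ^ Y) * Real.Gamma (1 - Y))) (𝓝[>] 0)
      (𝓝 (-(1 / 2) * ∫ ω in {ω | max (Z ω) 0 + W ω ≤ 0}, (max (Z ω) 0 + W ω) ^ 2 ∂P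
        - ∫ w in Ioi 0, w * (P.real {ω | w ≤ max (Z ω) 0 + W ω}
          - (kU * a ^ Y + kV * b ^ Y) * w ^ (-Y)))) := by
  have hZmeas : Measurable Z := hZ ▸ hU.sub hV
  have hWmeas : Measurable W := hW ▸ (hU.const_mul _).add (hV.const_mul _)
  have hZint : Integrable Z P := hZ ▸ hUint.sub hVint
  have hWint : Integrable W P := hW ▸ (hUint.const_mul _).add (hVint.const_mul _)
  have hWexp : ∀ l : ℝ, 0 ≤ l → Integrable (fun ω => Real.exp (-(l * W ω))) P := fun l hl =>
    hW ▸ integrable_exp_neg_mul_linearComb hUV hUexp hVexp (sub_nonneg.2 ha) (by linarith) hl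
  have htail := measureReal_le_max_add_sub_isBigO hU hV hUV hUint hVint hY.1.le hkU hkV ha hb
    hUtail hVtail
  refine tendsto_rpow_mul_inv_mul_integral_expRemainder_sub (X := fun ω => max (Z ω) 0 + W ω)
    ((hZmeas.max measurable_const).add hWmeas) (hZint.pos_part.add hWint)
    (fun l hl => integrable_exp_neg_mul_max_add hZmeas hWmeas hl (hWexp l hl)) hY
    (by simpa only [hZ, hW] using htail) (δ := fun t => |γ t|)
    (fun t => Measurable.aestronglyMeasurable (by fun_prop)) (fun t ω => ?_) (by simpa using hγ.abs)
  simpa [add_comm (W ω)] using abs_max_sub_max_le_abs (Z ω + γ t) (Z ω) 0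

end MaxExpansion

section StableVariables

variable {Ω : Type*} [MeasurableSpace Ω] {P : Measure Ω} {U V : Ω → ℝ} {Y C : ℝ}

lemma isPositiveStable_map (hU : Measurable U) (hY : Y ≠ 0)
    (hchar : ∀ u : ℝ, (∫ ω, Complex.exp (Complex.I * u * (U ω)) ∂P) =
      Complex.exp (((C * Real.Gamma (-Y) * |u| ^ Y : ℝ) : ℂ) *
        (((Real.cos (Real.pi * Y / 2) : ℝ) : ℂ)
          - Complex.I * ((Real.sign u : ℝ) : ℂ) * ((Real.sin (Real.pi * Y / 2) : ℝ) : ℂ)))) :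
    IsPositiveStable Y C (P.map U) := fun u => by
  have hphase : ∀ x : ℝ, (u * x * Complex.I : ℂ) = Complex.I * u * x := fun x => by ring
  rw [charFun_apply_real, integral_map hU.aemeasurable
    (Continuous.aestronglyMeasurable (by fun_prop)), stableExponent_eq hY, ← hchar]
  simp only [hphase]

lemma IsPositiveStable.measureReal_le_sub_isBigO [IsProbabilityMeasure P]
    (hstable : IsPositiveStable Y C (P.map U)) (hU : Measurable U) (hY : Y ∈ Ioo 1 2) :
    (fun x => P.real {ω | x ≤ U ω} - C / Y * x ^ (-Y)) =O[atTop] fun x => x ^ (-Y - 1) := by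
  have := Measure.isProbabilityMeasure_map (μ := P) hU.aemeasurable
  refine (hstable.measureReal_Ici_sub_isBigO hY).congr_left fun x => ?_
  rw [map_measureReal_apply hU measurableSet_Ici]
  rfl

end StableVariables

theorem stmt7_general
    {Ω : Type*} [MeasurableSpace Ω] (P : Measure Ω) [IsProbabilityMeasure P]
    {Y C₁ C₂ M G : ℝ} (hY : Y ∈ Ioo 1 2) (hC₁ : 0 ≤ C₁) (hC₂ : 0 ≤ C₂) (hM : 1 ≤ M) (hG : 0 ≤ G)
    {U V : Ω → ℝ} (hU : Measurable U) (hV : Measurable V) (hIndep : IndepFun U V P)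
    (hUstable : IsPositiveStable Y C₁ (P.map U)) (hVstable : IsPositiveStable Y C₂ (P.map V))
    {Z Ut : Ω → ℝ} (hZ : Z = fun ω => U ω - V ω)
    (hUt : Ut = fun ω => (M - 1) * U ω + (G + 1) * V ω)
    {γt : ℝ → ℝ} (hγt : Tendsto γt (𝓝[>] 0) (𝓝 0))
    {ϑ d₃₂ : ℝ} (hϑ : ϑ = -Real.Gamma (-Y) * (C₁ * M ^ Y + C₂ * (G + 1) ^ Y))
    (hd₃₂ : d₃₂ = -(1 / 2) * (∫ ω, indicator {ω | max (Z ω) 0 + Ut ω ≤ 0}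
        (fun ω => (max (Z ω) 0 + Ut ω) ^ 2) ω ∂P)
      - ∫ w in Ioi 0, w * (P.real {ω | w ≤ max (Z ω) 0 + Ut ω}
          - C₁ * M ^ Y / (Y * w ^ Y) - C₂ * (G + 1) ^ Y / (Y * w ^ Y))) :
    Tendsto (fun t => t ^ (1 - 2 / Y) *
        (t⁻¹ * ∫ ω, expRemainder (t ^ (1 / Y) * (Ut ω + max (Z ω + γt t) 0)) ∂P - ϑ))
      (𝓝[>] 0) (𝓝 d₃₂) := by
  have hY0 : 0 < Y := by linarith [hY.1]
  have := Measure.isProbabilityMeasure_map (μ := P) hU.aemeasurable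
  have := Measure.isProbabilityMeasure_map (μ := P) hV.aemeasurable
  have hlimit := tendsto_rpow_mul_inv_mul_integral_expRemainder_add_max_sub hU hV hIndep
    ((hUstable.integrable_id hY.1).comp_measurable hU)
    ((hVstable.integrable_id hY.1).comp_measurable hV)
    (fun l hl => (hUstable.integrable_exp_neg_mul hY hC₁ hl).comp_measurable hU)
    (fun l hl => (hVstable.integrable_exp_neg_mul hY hC₂ hl).comp_measurable hV)
    hY (by positivity) (by positivity) hM (le_add_of_nonneg_left hG)
    (hUstable.measureReal_le_sub_isBigO hU hY) (hVstable.measureReal_le_sub_isBigO hV hY)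
    hZ hUt hγt
  have hGamma : (C₁ / Y * M ^ Y + C₂ / Y * (G + 1) ^ Y) * Real.Gamma (1 - Y) = ϑ := by
    rw [sub_eq_neg_add, Real.Gamma_add_one (neg_ne_zero.2 hY0.ne'), hϑ]
    field_simp
  have hset : MeasurableSet {ω | max (Z ω) 0 + Ut ω ≤ 0} := by
    rw [hZ, hUt]
    measurability
  rw [hGamma] at hlimit
  convert! hlimit using 2
  rw [hd₃₂, integral_indicator hset]
  congr 1
  refine setIntegral_congr_fun measurableSet_Ioi fun w (hw : 0 < w) => ?_
  simp only [Real.rpow_neg hw.le]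
  field_simp
  ring

/-- Step-1 limit in the proof of Theorem 3.1 (display (ConclStep1)). -/
theorem stmt7
    {Ω : Type} [MeasurableSpace Ω] (P : Measure Ω) [IsProbabilityMeasure P]
    (Y C M G : ℝ) (hY : Y ∈ Set.Ioo (1:ℝ) 2) (hC : 0 < C) (hM : 1 < M) (hG : 0 < G)
    (U V : Ω → ℝ) (hU : Measurable U) (hV : Measurable V)
    (hIndep : IndepFun U V P)
    (hUchar : ∀ u : ℝ, (∫ ω, Complex.exp (Complex.I * u * (U ω)) ∂P) =
      Complex.exp (((C * Real.Gamma (-Y) * |u| ^ Y : ℝ) : ℂ) *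
        (((Real.cos (Real.pi * Y / 2) : ℝ) : ℂ)
          - Complex.I * ((Real.sign u : ℝ) : ℂ) * ((Real.sin (Real.pi * Y / 2) : ℝ) : ℂ))))
    (hVchar : ∀ u : ℝ, (∫ ω, Complex.exp (Complex.I * u * (V ω)) ∂P) =
      Complex.exp (((C * Real.Gamma (-Y) * |u| ^ Y : ℝ) : ℂ) *
        (((Real.cos (Real.pi * Y / 2) : ℝ) : ℂ)
          - Complex.I * ((Real.sign u : ℝ) : ℂ) * ((Real.sin (Real.pi * Y / 2) : ℝ) : ℂ))))
    (Z Ut : Ω → ℝ)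
    (hZ : Z = fun ω => U ω - V ω)
    (hUt : Ut = fun ω => (M - 1) * U ω + (G + 1) * V ω)
    (κ : ℝ → ℝ) (e₁ e₂ : ℝ)
    (hκ : (fun t => κ t - (e₁ * t + e₂ * t ^ (2 - 1/Y))) =o[𝓝[>] (0:ℝ)]
      fun t => t ^ (2 - 1/Y))
    (γ' : ℝ)
    (hγ' : γ' = -C * Real.Gamma (-Y) * ((M-1) ^ Y + (G+1) ^ Y - M ^ Y - G ^ Y))
    (γt : ℝ → ℝ)
    (hγt : ∀ t, γt t = t ^ (1 - 1/Y) * (γ' - κ t / t))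
    (ϑ d₃₂ : ℝ)
    (hϑ : ϑ = -C * Real.Gamma (-Y) * (M ^ Y + (G+1) ^ Y))
    (hd₃₂ : d₃₂ = -(1/2) * (∫ ω, Set.indicator {ω | max (Z ω) 0 + Ut ω ≤ 0}
        (fun ω => (max (Z ω) 0 + Ut ω) ^ 2) ω ∂P)
      - ∫ w in Set.Ioi (0:ℝ), w * ((P {ω | w ≤ max (Z ω) 0 + Ut ω}).toReal
          - C * M ^ Y / (Y * w ^ Y) - C * (G+1) ^ Y / (Y * w ^ Y))) :
    Filter.Tendsto
      (fun t => t ^ (1 - 2/Y) *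
        (t⁻¹ * (∫ ω, (1 - Real.exp (-(t ^ (1/Y) * (Ut ω + max (Z ω + γt t) 0)))
            - t ^ (1/Y) * (Ut ω + max (Z ω + γt t) 0)) ∂P) - ϑ))
      (𝓝[>] (0:ℝ)) (𝓝 d₃₂) := by
  have hY0 : 0 < Y := zero_lt_one.trans hY.1
  have hdrift : 0 < 1 - 1 / Y := sub_pos.2 ((div_lt_one hY0).2 hY.1)
  have hγ : Tendsto γt (𝓝[>] 0) (𝓝 0) := (tendsto_rpow_mul_sub_div_nhdsGT_zero hdrift γ'
    (isBigO_of_sub_isLittleO_rpow (by linarith) hκ)).congr fun t => (hγt t).symm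
  exact stmt7_general P hY hC.le hC.le hM.le hG.le hU hV hIndep
    (isPositiveStable_map hU hY0.ne' hUchar) (isPositiveStable_map hV hY0.ne' hVchar) hZ hUt hγ
    (by rw [hϑ]; ring) hd₃₂
end

section
/- Second-order shift expansion for the positive part of a symmetric stable variable (Step 2 in the proof of Theorem 3.1): if Z is a random variable with law μ, then E[(Z+ε)⁺] − E[Z⁺] = ε/2 + (p(0)/2)·ε² + o(ε²) as ε → 0 in ℝ, where a⁺ := max(a,0). -/
open MeasureTheory Filter Topology Asymptotics Set

/-!
For every finite measure `μ`, subtracting the first-order term from the shifted payoff leaves an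
integral over the short interval between `-ε` and `0`:
`∫ (x + ε)⁺ dμ - ∫ x⁺ dμ = ε μ(0, ∞) + ∫_{-ε}^0 (x + ε) dμ`.
If `μ` has a density that is continuous at `0`, the last integral is `f(0) ε² / 2 + o(ε²)`.

For the symmetric stable law of exponent `α > 1`, the mean is finite because
`|x|` is controlled by `∫₀¹ (1 - cos (u x)) / u² du`, whose expectation only sees
`1 - Re φ(u) = O(u ^ α)` near `0`; symmetry gives `μ(0, ∞) = 1 / 2`; and Fourier inversion gives
`f(0) = c ^ (-1 / α) Γ(1 / α + 1) / π > 0`. The positivity matters since a law only determines the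
positive part of a real-valued density.
-/

open scoped NNReal ENNReal FourierTransform

lemma max_add_zero_eq_add_indicator (x ε : ℝ) :
    max (x + ε) 0 = max x 0 + (Ioi 0).indicator (fun _ => ε) x +
      ((Ioc (-ε) 0).indicator (· + ε) x - (Ioc 0 (-ε)).indicator (· + ε) x) := by
  simp only [indicator_apply, mem_Ioi, mem_Ioc]
  grind

theorem integral_max_add_zero_eq {μ : Measure ℝ} [IsFiniteMeasure μ]
    (hμ : Integrable (fun x => max x 0) μ) (ε : ℝ) :
    ∫ x, max (x + ε) 0 ∂μ =
      ∫ x, max x 0 ∂μ + ε * μ.real (Ioi 0) + ∫ x in (-ε)..0, (x + ε) ∂μ := by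
  have hIoi : Integrable ((Ioi (0 : ℝ)).indicator fun _ => ε) μ :=
    (integrable_const ε).indicator measurableSet_Ioi
  have hIoc (a b : ℝ) : Integrable ((Ioc a b).indicator (· + ε)) μ :=
    (Continuous.integrableOn_Ioc (by fun_prop)).integrable_indicator measurableSet_Ioc
  simp_rw [max_add_zero_eq_add_indicator _ ε]
  rw [integral_add (by exact hμ.add hIoi) (by exact (hIoc _ _).sub (hIoc _ _)),
    integral_add hμ hIoi, integral_sub (hIoc _ _) (hIoc _ _),
    integral_indicator_const ε measurableSet_Ioi, integral_indicator measurableSet_Ioc,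
    integral_indicator measurableSet_Ioc, smul_eq_mul, mul_comm ε]
  rfl

lemma integral_sub_left_smul_const {E : Type*} [NormedAddCommGroup E] [NormedSpace ℝ E]
    [CompleteSpace E] (s a : ℝ) (v : E) :
    ∫ x in s..a, (x - s) • v = ((s - a) ^ 2 / 2) • v := by
  rw [intervalIntegral.integral_smul_const, intervalIntegral.integral_comp_sub_right (fun x => x),
    integral_id]
  ring_nf

theorem intervalIntegral_sub_smul_isLittleO {E : Type*} [NormedAddCommGroup E] [NormedSpace ℝ E]
    [CompleteSpace E] {q : ℝ → E} {a : ℝ} (hqm : StronglyMeasurableAtFilter q (𝓝 a))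
    (hq : ContinuousAt q a) :
    (fun s => (∫ x in s..a, (x - s) • q x) - ((s - a) ^ 2 / 2) • q a)
      =o[𝓝 a] fun s => (s - a) ^ 2 := by
  refine isLittleO_iff.2 fun η hη => ?_
  obtain ⟨δ, hδ, hqδ⟩ := Metric.continuousAt_iff.1 hq η hη
  have hint : ∀ᶠ s in 𝓝 a, IntervalIntegrable q volume s a :=
    hq.tendsto.eventually_intervalIntegrable hqm (volume.finiteAt_nhds a) tendsto_id
      tendsto_const_nhds
  filter_upwards [Metric.ball_mem_nhds a hδ, hint] with s hs hqs
  have hsub : Continuous fun x : ℝ => x - s := by fun_prop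
  rw [← integral_sub_left_smul_const, ← intervalIntegral.integral_sub
    (by exact hqs.continuousOn_smul hsub.continuousOn)
    (Continuous.intervalIntegrable (by fun_prop) _ _)]
  have hbound (x : ℝ) (hx : x ∈ uIoc s a) :
      ‖(x - s) • q x - (x - s) • q a‖ ≤ |s - a| * η := by
    have hx' := uIoc_subset_uIcc hx
    have hxa : dist x a < δ := by
      rw [dist_comm, Real.dist_eq]
      exact (abs_sub_right_of_mem_uIcc hx').trans_lt (by rwa [← Real.dist_eq, dist_comm])
    rw [← smul_sub, norm_smul, ← dist_eq_norm (q x)]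
    gcongr
    · exact abs_sub_comm s a ▸ abs_sub_left_of_mem_uIcc hx'
    · exact (hqδ hxa).le
  calc
    _ ≤ |s - a| * η * |a - s| := intervalIntegral.norm_integral_le_of_norm_le_const hbound
    _ = η * ‖(s - a) ^ 2‖ := by rw [abs_sub_comm a s, norm_pow, Real.norm_eq_abs]; ring

theorem integral_max_add_zero_isLittleO_of_density {μ : Measure ℝ} [IsFiniteMeasure μ]
    (hμ : Integrable (fun x => max x 0) μ) {f : ℝ → ℝ≥0} (hf : AEMeasurable f)
    (hf0 : ContinuousAt f 0) (hμf : μ = volume.withDensity fun x => f x) :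
    (fun ε => ∫ x, max (x + ε) 0 ∂μ - ∫ x, max x 0 ∂μ
        - (ε * μ.real (Ioi 0) + f 0 / 2 * ε ^ 2))
      =o[𝓝 0] fun ε => ε ^ 2 := by
  have hrem := intervalIntegral_sub_smul_isLittleO (q := fun x => (f x : ℝ))
    ⟨univ, univ_mem, hf.coe_nnreal_real.aestronglyMeasurable.restrict⟩
    (NNReal.continuous_coe.continuousAt.comp hf0)
  have hneg : Tendsto (fun ε : ℝ => -ε) (𝓝 0) (𝓝 0) := by simpa using tendsto_neg (0 : ℝ)
  refine (hrem.comp_tendsto hneg).congr (fun ε => ?_) fun ε => ?_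
  · have hdens : ∫ x in (-ε)..0, (x + ε) ∂μ = ∫ x in (-ε)..0, (x - -ε) • (f x : ℝ) := by
      simp only [intervalIntegral, hμf,
        setIntegral_withDensity_eq_setIntegral_smul₀ hf.restrict _ measurableSet_Ioc,
        NNReal.smul_def, smul_eq_mul, sub_neg_eq_add, mul_comm]
    simp only [Function.comp_apply, integral_max_add_zero_eq hμ, hdens, smul_eq_mul]
    ring
  · simp

lemma isNegInvariant_of_charFun_neg {E : Type*} [NormedAddCommGroup E] [InnerProductSpace ℝ E]
    [CompleteSpace E] [SecondCountableTopology E] [MeasurableSpace E] [BorelSpace E]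
    {μ : Measure E} [IsFiniteMeasure μ]
    (h : ∀ t, charFun μ (-t) = charFun μ t) : μ.IsNegInvariant where
  neg_eq_self := by
    have : IsFiniteMeasure μ.neg := by unfold Measure.neg; infer_instance
    refine Measure.ext_of_charFun (funext fun t => ?_)
    rw [← h t, charFun_apply, charFun_apply, Measure.neg,
      integral_map (by fun_prop) (by fun_prop)]
    simp

lemma measureReal_Ioi_zero_of_isNegInvariant (μ : Measure ℝ) [IsFiniteMeasure μ]
    [μ.IsNegInvariant] (h0 : μ {0} = 0) : μ.real (Ioi 0) = μ.real univ / 2 := by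
  have hIio : μ.real (Iio 0) = μ.real (Ioi 0) := by
    rw [measureReal_def, measureReal_def, ← Measure.measure_neg, neg_Iio, neg_zero]
  have hIic : μ.real (Iic 0) = μ.real (Iio 0) :=
    measureReal_congr (Iio_ae_eq_Iic' h0).symm
  have hcompl := measureReal_compl (μ := μ) (s := Iic (0 : ℝ)) measurableSet_Iic
  rw [compl_Iic] at hcompl
  linarith

lemma integral_one_sub_cos_eq_re_charFun {μ : Measure ℝ} [IsFiniteMeasure μ] (u : ℝ) :
    ∫ x, (1 - Real.cos (u * x)) ∂μ = (charFun μ 0 - charFun μ u).re := by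
  have hexp (t : ℝ) : Integrable (fun x : ℝ => Complex.exp (t * x * Complex.I)) μ :=
    .of_bound (C := 1) (by fun_prop) (.of_forall fun x => by
      rw [← Complex.ofReal_mul, Complex.norm_exp_ofReal_mul_I])
  rw [charFun_apply_real, charFun_apply_real, ← integral_sub (hexp 0) (hexp u),
    ← RCLike.re_eq_complex_re, ← integral_re (by exact (hexp 0).sub (hexp u))]
  congr with x
  simp [← Complex.ofReal_mul, Complex.exp_ofReal_mul_I_re]

lemma ofReal_abs_le_one_add_lintegral_one_sub_cos (x : ℝ) :
    ENNReal.ofReal |x| ≤ 1 + ENNReal.ofReal (Real.pi ^ 2 / 2) *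
      ∫⁻ u in Ioc (0 : ℝ) 1, ENNReal.ofReal ((1 - Real.cos (u * x)) / u ^ 2) := by
  rcases le_or_gt |x| 1 with hx | hx
  · exact (ENNReal.ofReal_le_one.2 hx).trans le_self_add
  refine le_trans ?_ le_add_self
  have hx0 : 0 < |x| := one_pos.trans hx
  have hcos {u : ℝ} (hu : u ∈ Ioc 0 (1 / |x|)) :
      2 / Real.pi ^ 2 * x ^ 2 ≤ (1 - Real.cos (u * x)) / u ^ 2 := by
    have hux : |u * x| ≤ Real.pi := by
      rw [abs_mul, abs_of_pos hu.1]
      linarith [(le_div_iff₀ hx0).1 hu.2, Real.pi_gt_three]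
    rw [le_div_iff₀ (pow_pos hu.1 2)]
    linarith [Real.cos_le_one_sub_mul_cos_sq hux, mul_pow u x 2]
  calc
    ENNReal.ofReal |x|
      = ENNReal.ofReal (Real.pi ^ 2 / 2) *
          ∫⁻ _ in Ioc (0 : ℝ) (1 / |x|), ENNReal.ofReal (2 / Real.pi ^ 2 * x ^ 2) := by
        rw [setLIntegral_const, Real.volume_Ioc, ← ENNReal.ofReal_mul (by positivity),
          ← ENNReal.ofReal_mul (by positivity), ← sq_abs x]
        congr 1
        field_simp
        simp
    _ ≤ ENNReal.ofReal (Real.pi ^ 2 / 2) *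
          ∫⁻ u in Ioc (0 : ℝ) (1 / |x|), ENNReal.ofReal ((1 - Real.cos (u * x)) / u ^ 2) := by
        gcongr 1
        exact setLIntegral_mono' measurableSet_Ioc fun u hu => ENNReal.ofReal_le_ofReal (hcos hu)
    _ ≤ _ := by
        gcongr
        exact (div_le_one hx0).2 hx.le

theorem integrable_id_of_integrableOn_re_charFun {μ : Measure ℝ} [IsFiniteMeasure μ]
    (h : IntegrableOn (fun u => (charFun μ 0 - charFun μ u).re / u ^ 2) (Ioc 0 1)) :
    Integrable id μ := by
  have hswap : ∫⁻ x, (∫⁻ u in Ioc (0 : ℝ) 1, ENNReal.ofReal ((1 - Real.cos (u * x)) / u ^ 2)) ∂μ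
      = ∫⁻ u in Ioc (0 : ℝ) 1, ENNReal.ofReal ((charFun μ 0 - charFun μ u).re / u ^ 2) := by
    rw [lintegral_lintegral_swap (by
      apply Measurable.aemeasurable
      unfold Function.uncurry
      fun_prop)]
    refine lintegral_congr fun u => ?_
    have hcos : Integrable (fun x => Real.cos (u * x)) μ :=
      .of_bound (C := 1) (by fun_prop) (.of_forall fun x => Real.abs_cos_le_one _)
    rw [← integral_one_sub_cos_eq_re_charFun, ← integral_div, ofReal_integral_eq_lintegral_ofReal
      (by exact ((integrable_const 1).sub hcos).div_const _)
      (.of_forall fun x => div_nonneg (sub_nonneg.2 (Real.cos_le_one _)) (sq_nonneg u))]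
  refine ⟨aestronglyMeasurable_id, (hasFiniteIntegral_iff_norm _).2 ?_⟩
  calc
    ∫⁻ x, ENNReal.ofReal ‖id x‖ ∂μ
      ≤ ∫⁻ x, (1 + ENNReal.ofReal (Real.pi ^ 2 / 2) *
          ∫⁻ u in Ioc (0 : ℝ) 1, ENNReal.ofReal ((1 - Real.cos (u * x)) / u ^ 2)) ∂μ :=
        lintegral_mono ofReal_abs_le_one_add_lintegral_one_sub_cos
    _ = μ univ + ENNReal.ofReal (Real.pi ^ 2 / 2) *
          ∫⁻ u in Ioc (0 : ℝ) 1, ENNReal.ofReal ((charFun μ 0 - charFun μ u).re / u ^ 2) := by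
        rw [lintegral_add_left (by fun_prop), lintegral_const_mul' _ _ ENNReal.ofReal_ne_top,
          lintegral_one, hswap]
    _ < ∞ := ENNReal.add_lt_top.2
        ⟨measure_lt_top μ univ, ENNReal.mul_lt_top ENNReal.ofReal_lt_top h.lintegral_lt_top⟩

lemma fourier_coe_eq_charFun_withDensity {f : ℝ → ℝ≥0} (hf : AEMeasurable f) (w : ℝ) :
    𝓕 (fun x => ((f x : ℝ) : ℂ)) w =
      charFun (volume.withDensity fun x => f x) (-2 * Real.pi * w) := by
  rw [Real.fourier_real_eq_integral_exp_smul, charFun_apply_real,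
    integral_withDensity_eq_integral_smul₀ hf]
  congr with x
  rw [NNReal.smul_def, Complex.real_smul, smul_eq_mul, mul_comm]
  congr 3
  push_cast
  ring

theorem density_eq_integral_charFun {μ : Measure ℝ} [IsFiniteMeasure μ]
    (hμ : Integrable (charFun μ)) {f : ℝ → ℝ≥0} (hf : AEMeasurable f)
    (hμf : μ = volume.withDensity fun x => f x) {x : ℝ} (hx : ContinuousAt f x) :
    ((f x : ℝ) : ℂ) =
      (2 * Real.pi)⁻¹ * ∫ t : ℝ, Complex.exp (-(t * x) * Complex.I) * charFun μ t := by
  have hfint : Integrable fun y => ((f y : ℝ) : ℂ) := by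
    have hone : Integrable (fun _ : ℝ => (1 : ℂ)) μ := integrable_const 1
    rw [hμf, integrable_withDensity_iff_integrable_smul₀ hf] at hone
    simpa [NNReal.smul_def] using hone
  have hfourier : 𝓕 (fun y => ((f y : ℝ) : ℂ)) = fun w => charFun μ (-2 * Real.pi * w) :=
    funext fun w => hμf ▸ fourier_coe_eq_charFun_withDensity hf w
  have hfourier_int : Integrable (𝓕 fun y => ((f y : ℝ) : ℂ)) :=
    hfourier ▸ hμ.comp_mul_left' (by simp [Real.pi_ne_zero])
  have hcont : ContinuousAt (fun y => ((f y : ℝ) : ℂ)) x := by fun_prop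
  calc
    ((f x : ℝ) : ℂ) = 𝓕⁻ (𝓕 fun y => ((f y : ℝ) : ℂ)) x :=
      (hfint.fourierInv_fourier_eq hfourier_int hcont).symm
    _ = ∫ w : ℝ, Complex.exp (-((-2 * Real.pi * w : ℝ) * x) * Complex.I) *
          charFun μ (-2 * Real.pi * w) := by
      rw [Real.fourierInv_eq', hfourier]
      congr with w
      simp only [RCLike.inner_apply, conj_trivial, smul_eq_mul]
      congr 2
      push_cast
      ring
    _ = (2 * Real.pi)⁻¹ * ∫ t : ℝ, Complex.exp (-(t * x) * Complex.I) * charFun μ t := by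
      rw [Measure.integral_comp_mul_left
        (fun t : ℝ => Complex.exp (-(t * x) * Complex.I) * charFun μ t), Complex.real_smul]
      simp [abs_of_pos Real.pi_pos]

lemma integral_exp_neg_mul_abs_rpow {α c : ℝ} (hα : 0 < α) (hc : 0 < c) :
    ∫ u : ℝ, Real.exp (-(c * |u| ^ α)) = 2 * (c ^ (-1 / α) * Real.Gamma (1 / α + 1)) := by
  simp_rw [← neg_mul]
  rw [integral_comp_abs (f := fun u => Real.exp (-c * u ^ α)), integral_exp_neg_mul_rpow hα hc]

lemma integrable_exp_neg_mul_abs_rpow {α c : ℝ} (hα : 0 < α) (hc : 0 < c) :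
    Integrable fun u : ℝ => Real.exp (-(c * |u| ^ α)) := by
  have : 0 < Real.Gamma (1 / α + 1) := Real.Gamma_pos_of_pos (by positivity)
  exact .of_integral_ne_zero (by rw [integral_exp_neg_mul_abs_rpow hα hc]; positivity)

/-- `μ` is the symmetric stable law of exponent `α` and scale parameter `c`, whose characteristic
function is `t ↦ exp (-c |t| ^ α)`. The parameters are unrestricted, although such a law exists
only for special values; `α = 2` gives the centred Gaussian law of variance `2 c`. -/
def IsSymmetricStable (α c : ℝ) (μ : Measure ℝ) : Prop :=
  ∀ t, charFun μ t = Real.exp (-(c * |t| ^ α))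

namespace IsSymmetricStable

variable {α c : ℝ} {μ : Measure ℝ}

lemma of_integral_exp
    (h : ∀ u : ℝ, ∫ x, Complex.exp (Complex.I * u * x) ∂μ = Real.exp (-(c * |u| ^ α))) :
    IsSymmetricStable α c μ := fun t => by
  rw [charFun_apply_real, ← h]
  congr with x
  ring_nf

lemma isNegInvariant [IsFiniteMeasure μ] (h : IsSymmetricStable α c μ) : μ.IsNegInvariant :=
  isNegInvariant_of_charFun_neg fun t => by rw [h, h, abs_neg]

theorem integrable_id [IsFiniteMeasure μ] (h : IsSymmetricStable α c μ) (hα : 1 < α) :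
    Integrable id μ := by
  have hre (u : ℝ) : (charFun μ 0 - charFun μ u).re = 1 - Real.exp (-(c * |u| ^ α)) := by
    rw [h, h, ← Complex.ofReal_sub, Complex.ofReal_re, abs_zero,
      Real.zero_rpow (one_pos.trans hα).ne', mul_zero, neg_zero, Real.exp_zero]
  have hnonneg (u : ℝ) : 0 ≤ (charFun μ 0 - charFun μ u).re :=
    integral_one_sub_cos_eq_re_charFun (μ := μ) u ▸
      integral_nonneg fun x => sub_nonneg.2 (Real.cos_le_one _)
  have hpow : IntegrableOn (fun u : ℝ => c * u ^ (α - 2)) (Ioc 0 1) :=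
    ((intervalIntegral.intervalIntegrable_rpow' (by linarith)).const_mul c).1
  refine integrable_id_of_integrableOn_re_charFun <|
    hpow.mono' (by simp_rw [hre]; exact Measurable.aestronglyMeasurable (by fun_prop)) <|
      (ae_restrict_iff' measurableSet_Ioc).2 <| .of_forall fun u hu => ?_
  rw [Real.norm_of_nonneg (div_nonneg (hnonneg u) (sq_nonneg u)), hre, abs_of_pos hu.1,
    Real.rpow_sub hu.1, Real.rpow_two, ← mul_div_assoc]
  gcongr
  linarith [Real.add_one_le_exp (-(c * u ^ α))]

theorem density_zero [IsFiniteMeasure μ] (h : IsSymmetricStable α c μ) (hα : 0 < α) (hc : 0 < c)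
    {f : ℝ → ℝ≥0} (hf : AEMeasurable f) (hf0 : ContinuousAt f 0)
    (hμf : μ = volume.withDensity fun x => f x) :
    f 0 = c ^ (-1 / α) * Real.Gamma (1 / α + 1) / Real.pi := by
  have hφ : Integrable (charFun μ) := by
    rw [funext h]
    exact (integrable_exp_neg_mul_abs_rpow hα hc).ofReal
  apply Complex.ofReal_injective
  rw [density_eq_integral_charFun hφ hf hμf hf0]
  simp only [Complex.ofReal_zero, mul_zero, neg_zero, zero_mul, Complex.exp_zero, one_mul, h _,
    integral_complex_ofReal, integral_exp_neg_mul_abs_rpow hα hc]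
  push_cast
  field_simp

end IsSymmetricStable

theorem stmt8_general {Ω : Type*} [MeasurableSpace Ω] {P : Measure Ω} {α c : ℝ} (hα : 1 < α)
    (hc : 0 < c) {μ : Measure ℝ} [IsProbabilityMeasure μ] (hμ : IsSymmetricStable α c μ)
    {p : ℝ → ℝ} (hp : AEMeasurable p) (hp0 : ContinuousAt p 0)
    (hμp : μ = volume.withDensity fun x => ENNReal.ofReal (p x)) {Z : Ω → ℝ}
    (hZ : ProbabilityTheory.HasLaw Z μ P) :
    (fun ε => (∫ ω, max (Z ω + ε) 0 ∂P) - (∫ ω, max (Z ω) 0 ∂P)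
        - (ε / 2 + (p 0 / 2) * ε ^ 2))
      =o[𝓝 (0:ℝ)] fun ε => ε ^ 2 := by
  have hf0 : ContinuousAt (fun x => (p x).toNNReal) 0 := by fun_prop
  have hp0_pos : 0 < p 0 := by
    have hdens := hμ.density_zero (one_pos.trans hα) hc hp.real_toNNReal hf0 hμp
    have : 0 < Real.Gamma (1 / α + 1) := Real.Gamma_pos_of_pos (by positivity)
    rw [← Real.toNNReal_pos, ← NNReal.coe_pos, hdens]
    positivity
  have hhalf : μ.real (Ioi 0) = 1 / 2 := by
    have := hμ.isNegInvariant
    have hac : μ ≪ volume := hμp ▸ withDensity_absolutelyContinuous _ _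
    rw [measureReal_Ioi_zero_of_isNegInvariant μ (hac Real.volume_singleton), probReal_univ]
  have hlaw (ε : ℝ) : ∫ ω, max (Z ω + ε) 0 ∂P = ∫ x, max (x + ε) 0 ∂μ :=
    hZ.integral_comp (f := fun x => max (x + ε) 0) (by fun_prop)
  have hlaw0 : ∫ ω, max (Z ω) 0 ∂P = ∫ x, max x 0 ∂μ := by simpa using hlaw 0
  have hexpansion := integral_max_add_zero_isLittleO_of_density (hμ.integrable_id hα).pos_part
    hp.real_toNNReal hf0 hμp
  refine hexpansion.congr_left fun ε => ?_
  rw [hlaw, hlaw0, hhalf, Real.coe_toNNReal _ hp0_pos.le]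
  ring

/-- Second-order shift expansion for the positive part of a symmetric stable variable:
`E[(Z+ε)⁺] − E[Z⁺] = ε/2 + (p(0)/2)·ε² + o(ε²)` as `ε → 0`. -/
theorem stmt8
    {Ω : Type} [MeasurableSpace Ω] (P : Measure Ω) [IsProbabilityMeasure P]
    (Y c : ℝ) (hY : Y ∈ Set.Ioo (1:ℝ) 2) (hc : 0 < c)
    (μ : Measure ℝ) [IsProbabilityMeasure μ]
    (hchar : ∀ u : ℝ, (∫ x, Complex.exp (Complex.I * u * x) ∂μ)
      = (Real.exp (-(c * |u| ^ Y)) : ℂ))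
    (p : ℝ → ℝ) (hp : Continuous p)
    (hdens : μ = MeasureTheory.volume.withDensity (fun x => ENNReal.ofReal (p x)))
    (Z : Ω → ℝ) (hZmeas : Measurable Z) (hZlaw : Measure.map Z P = μ) :
    (fun ε => (∫ ω, max (Z ω + ε) 0 ∂P) - (∫ ω, max (Z ω) 0 ∂P)
        - (ε / 2 + (p 0 / 2) * ε ^ 2))
      =o[𝓝 (0:ℝ)] fun ε => ε ^ 2 :=
  stmt8_general hY.1 hc (.of_integral_exp hchar) hp.aemeasurable hp.continuousAt hdens
    ⟨hZmeas.aemeasurable, hZlaw⟩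
end
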